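/- For i = 1,2 let (Λᵢ, Wᵢ, 𝓜ᵢ) satisfy Hartwig's assumptions: Λᵢ an integrally closed integral domain and commutative ℂ-algebra, Wᵢ a finite group of ℂ-algebra automorphisms of Λᵢ, 𝓜ᵢ a submonoid of the group of automorphisms of Λᵢ with (𝓜ᵢ𝓜ᵢ⁻¹) ∩ Wᵢ = {1}, w∘μ∘w⁻¹ ∈ 𝓜ᵢ for all w ∈ Wᵢ and μ ∈ 𝓜ᵢ, and Λᵢ Noetherian as a module over Γᵢ = Λᵢ^{Wᵢ}. Let 𝒰ᵢ ⊆ 𝒦ᵢ = (Lᵢ#𝓜ᵢ)^{Wᵢ} be a principal Galois Γᵢ-order: a finitely generated Γᵢ-subring with Kᵢ·𝒰ᵢ = 𝒰ᵢ·Kᵢ = 𝒦ᵢ (Kᵢ = Lᵢ^{Wᵢ}) such that X(γ) ∈ Γᵢ for all X ∈ 𝒰ᵢ and γ ∈ Γᵢ. Assume Λ = Λ₁ ⊗_ℂ Λ₂ is an integral domain, and let ψ be the canonical embedding of (L₁#Ŵ₁) ⊗_ℂ (L₂#Ŵ₂) into L#Ŵ for the product data (Λ, W₁×W₂, 𝓜₁×𝓜₂).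 Then ψ(𝒰₁ ⊗_ℂ 𝒰₂) is a principal Galois (Γ₁⊗_ℂΓ₂)-order in 𝒦 = (L#(𝓜₁×𝓜₂))^{W₁×W₂}: it is a finitely generated (Γ₁⊗_ℂΓ₂)-subring of 𝒦, satisfies K·ψ(𝒰₁⊗𝒰₂) = ψ(𝒰₁⊗𝒰₂)·K = 𝒦 where K = L^{W₁×W₂}, and every X ∈ ψ(𝒰₁⊗𝒰₂) satisfies X(γ) ∈ Γ₁⊗_ℂΓ₂ for all γ ∈ Γ₁⊗_ℂΓ₂. -/

import Mathlib

/-!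
Statement 14: Given two sets of Galois order data (Λᵢ, Wᵢ, 𝓜ᵢ) satisfying Hartwig's
assumptions (Λᵢ integrally closed domains, Wᵢ finite groups of automorphisms, 𝓜ᵢ submonoids
of automorphisms with separation (𝓜ᵢ𝓜ᵢ⁻¹) ∩ Wᵢ = 1 and Wᵢ-invariance, Λᵢ Noetherian over
Γᵢ = Λᵢ^{Wᵢ}) and principal Galois Γᵢ-orders 𝒰ᵢ ⊆ 𝒦ᵢ = (Lᵢ#𝓜ᵢ)^{Wᵢ}, the image
ψ(𝒰₁ ⊗_ℂ 𝒰₂) under the canonical embedding is a principal Galois (Γ₁⊗_ℂΓ₂)-order in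
𝒦 = (L#(𝓜₁×𝓜₂))^{W₁×W₂} for the product data.
-/

set_option synthInstance.maxHeartbeats 1000000
set_option maxHeartbeats 4000000

open scoped TensorProduct

noncomputable section

/-- `gen f w` is the ℂ-linear endomorphism `m_f ∘ w` of `L`. -/
def gen {L : Type*} [Field L] [Algebra ℂ L] (f : L) (w : L ≃ₐ[ℂ] L) : Module.End ℂ L :=
  (LinearMap.mulLeft ℂ f) ∘ₗ (w.toLinearMap)

/-- The skew monoid ring `L # W` realized inside `End_ℂ(L)`. -/
def skew {L : Type*} [Field L] [Algebra ℂ L] (W : Submonoid (L ≃ₐ[ℂ] L)) :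
    Subalgebra ℂ (Module.End ℂ L) :=
  Algebra.adjoin ℂ { X | ∃ (f : L) (w : L ≃ₐ[ℂ] L), w ∈ W ∧ X = gen f w }

lemma gen_mem_skew {L : Type*} [Field L] [Algebra ℂ L] {W : Submonoid (L ≃ₐ[ℂ] L)}
    (f : L) {w : L ≃ₐ[ℂ] L} (hw : w ∈ W) : gen f w ∈ skew W :=
  Algebra.subset_adjoin ⟨f, w, hw, rfl⟩

/-- The fixed subalgebra `Γ = Λ^W`. -/
def fixedSub {L : Type*} [Field L] [Algebra ℂ L] (Λ : Subalgebra ℂ L)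
    (W : Subgroup (L ≃ₐ[ℂ] L)) : Subalgebra ℂ L where
  carrier := {x | x ∈ Λ ∧ ∀ w ∈ W, w x = x}
  mul_mem' := fun ha hb => ⟨mul_mem ha.1 hb.1,
    fun w hw => by rw [map_mul, ha.2 w hw, hb.2 w hw]⟩
  one_mem' := ⟨one_mem _, fun w _ => map_one w⟩
  add_mem' := fun ha hb => ⟨add_mem ha.1 hb.1,
    fun w hw => by rw [map_add, ha.2 w hw, hb.2 w hw]⟩
  zero_mem' := ⟨zero_mem _, fun w _ => map_zero w⟩
  algebraMap_mem' := fun c => ⟨Λ.algebraMap_mem c, fun w _ => w.commutes c⟩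

/-- The fixed subfield `K = L^W` (as a set). -/
def fixedSet {L : Type*} [Field L] [Algebra ℂ L] (W : Subgroup (L ≃ₐ[ℂ] L)) : Set L :=
  {x | ∀ w ∈ W, w x = x}

/-- `Λ` as a module over a subalgebra `Γ' ≤ Λ`. -/
def lambdaOver {L : Type*} [Field L] [Algebra ℂ L] (Λ Γ' : Subalgebra ℂ L)
    (h : ∀ x ∈ Γ', x ∈ Λ) : Submodule ↥Γ' L where
  carrier := Λ
  add_mem' := fun ha hb => add_mem ha hb
  zero_mem' := zero_mem _
  smul_mem' := fun c x hx => by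
    have h1 : (c : L) * x ∈ Λ := mul_mem (h (c : L) c.2) hx
    simpa [Algebra.smul_def, Subalgebra.algebraMap_eq] using h1

/-- `𝒦 = (L#𝓜)^W`: the `W`-conjugation-invariant elements of the skew monoid ring `L#𝓜`. -/
def conjInv {L : Type*} [Field L] [Algebra ℂ L] (M : Submonoid (L ≃ₐ[ℂ] L))
    (W : Subgroup (L ≃ₐ[ℂ] L)) : Set (Module.End ℂ L) :=
  {X | X ∈ skew M ∧ ∀ w : L ≃ₐ[ℂ] L, w ∈ W → gen 1 w * X * gen 1 w⁻¹ = X}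

/-- The set of products `m_k ∘ X`, `k ∈ K`, `X ∈ U` (so that `K·U` is its span). -/
def leftMulSet {L : Type*} [Field L] [Algebra ℂ L] (K : Set L) (U : Set (Module.End ℂ L)) :
    Set (Module.End ℂ L) :=
  {Z | ∃ k ∈ K, ∃ X ∈ U, Z = (LinearMap.mulLeft ℂ k) ∘ₗ X}

/-- The set of products `X ∘ m_k`, `k ∈ K`, `X ∈ U` (so that `U·K` is its span). -/
def rightMulSet {L : Type*} [Field L] [Algebra ℂ L] (K : Set L) (U : Set (Module.End ℂ L)) :
    Set (Module.End ℂ L) :=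
  {Z | ∃ k ∈ K, ∃ X ∈ U, Z = X ∘ₗ (LinearMap.mulLeft ℂ k)}

/-- The multiplication operators `m_γ`, `γ ∈ Γ`. -/
def gammaMulSet {L : Type*} [Field L] [Algebra ℂ L] (Γ' : Subalgebra ℂ L) :
    Set (Module.End ℂ L) :=
  {Z | ∃ γ ∈ Γ', Z = gen γ 1}

/-- The submonoid `Ŵ = ⟨W, 𝓜⟩` generated by `W` and `𝓜`. -/
def genMon {L₀ : Type*} [Field L₀] [Algebra ℂ L₀] (W : Subgroup (L₀ ≃ₐ[ℂ] L₀))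
    (M : Submonoid (L₀ ≃ₐ[ℂ] L₀)) : Submonoid (L₀ ≃ₐ[ℂ] L₀) :=
  Submonoid.closure ((W : Set (L₀ ≃ₐ[ℂ] L₀)) ∪ (M : Set (L₀ ≃ₐ[ℂ] L₀)))

/-- `Λ = Λ₁ ⊗ Λ₂`, realized inside `L` as the subalgebra generated by `ι₁(Λ₁) ∪ ι₂(Λ₂)`. -/
def tensorSub {L₁ L₂ L : Type*} [Field L₁] [Algebra ℂ L₁] [Field L₂] [Algebra ℂ L₂]
    [Field L] [Algebra ℂ L] (Λ₁ : Subalgebra ℂ L₁) (Λ₂ : Subalgebra ℂ L₂)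
    (ι₁ : L₁ →ₐ[ℂ] L) (ι₂ : L₂ →ₐ[ℂ] L) : Subalgebra ℂ L :=
  Algebra.adjoin ℂ ((ι₁ '' (Λ₁ : Set L₁)) ∪ (ι₂ '' (Λ₂ : Set L₂)))

/-- The span of pure tensors `X₁ ⊗ X₂` with `Xᵢ ∈ Uᵢ`; this realizes `𝒰₁ ⊗_ℂ 𝒰₂`. -/
def pureSpan {L₁ L₂ : Type*} [Field L₁] [Algebra ℂ L₁] [Field L₂] [Algebra ℂ L₂]
    (W₁' : Submonoid (L₁ ≃ₐ[ℂ] L₁)) (W₂' : Submonoid (L₂ ≃ₐ[ℂ] L₂))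
    (F₁ : Set (Module.End ℂ L₁)) (F₂ : Set (Module.End ℂ L₂)) :
    Submodule ℂ (↥(skew W₁') ⊗[ℂ] ↥(skew W₂')) :=
  Submodule.span ℂ {t | ∃ (X₁ : skew W₁') (X₂ : skew W₂'),
    ((X₁ : Module.End ℂ L₁) ∈ F₁) ∧ ((X₂ : Module.End ℂ L₂) ∈ F₂) ∧ t = X₁ ⊗ₜ[ℂ] X₂}

/-!
Since the two tensor factors commute in `End_ℂ(L)`, `ψ(𝒰₁ ⊗ 𝒰₂)` is the product of the images of
`𝒰₁` and `𝒰₂`, so finitely many generators of each generate it, and it acts on `Γ₁ ⊗ Γ₂` factor by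
factor. For `𝒦 = K ψ(𝒰₁ ⊗ 𝒰₂)`, multiplying numerator and denominator by the other conjugates of
the denominator writes every element of `L` as `k t` with `k` invariant under `W₁ × W₂` and `t` in
the image of `L₁ ⊗ L₂`. Hence `L # (𝓜₁ × 𝓜₂)` is `K` times the image of
`(L₁ # 𝓜₁) ⊗ (L₂ # 𝓜₂)`. The trace over `W₁ × W₂` maps `L # (𝓜₁ × 𝓜₂)` onto `𝒦`, is linear over
`K` and is the tensor product of the traces over `W₁` and `W₂`, so `𝒦 = K ψ(𝒦₁ ⊗ 𝒦₂)`, and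
`𝒦ᵢ = Kᵢ 𝒰ᵢ` with `K₁ ⊗ K₂` mapping into `K`.
-/

section TensorImage

variable {R A A₁ A₂ C : Type*} [CommSemiring R] [Semiring A] [Algebra R A]
  [Semiring A₁] [Algebra R A₁] [Semiring A₂] [Algebra R A₂] [Semiring C] [Algebra R C]

lemma toSubmodule_sup_of_commute {S T : Subalgebra R A} (h : ∀ s ∈ S, ∀ t ∈ T, Commute s t) :
    Subalgebra.toSubmodule (S ⊔ T) = Subalgebra.toSubmodule S * Subalgebra.toSubmodule T := by
  refine le_antisymm ?_ (Subalgebra.mul_toSubmodule_le S T)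
  have hcomm : Subalgebra.toSubmodule S * Subalgebra.toSubmodule T =
      Subalgebra.toSubmodule T * Subalgebra.toSubmodule S :=
    Submodule.mul_comm_of_commute h
  have hmul : ∀ {s t}, s ∈ S → t ∈ T →
      s * t ∈ Subalgebra.toSubmodule S * Subalgebra.toSubmodule T :=
    fun hs ht => Submodule.mul_mem_mul hs ht
  let P : Subalgebra R A :=
    (Subalgebra.toSubmodule S * Subalgebra.toSubmodule T).toSubalgebra
      (by simpa only [mul_one] using hmul (one_mem S) (one_mem T))
      (fun x y hx hy => by
        have hxy := Submodule.mul_mem_mul hx hy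
        rwa [mul_assoc, ← mul_assoc _ (Subalgebra.toSubmodule S), ← hcomm, mul_assoc, ← mul_assoc,
          Subalgebra.isIdempotentElem_toSubmodule, Subalgebra.isIdempotentElem_toSubmodule] at hxy)
  have hS : S ≤ P := fun s hs => mul_one s ▸ hmul hs (one_mem T)
  have hT : T ≤ P := fun t ht => one_mul t ▸ hmul (one_mem S) ht
  exact sup_le hS hT

lemma le_toSubmodule_mul (S : Subalgebra R A) (V : Submodule R A) :
    V ≤ Subalgebra.toSubmodule S * V :=
  fun x hx => one_mul x ▸ Submodule.mul_mem_mul (one_mem S) hx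

lemma le_mul_toSubmodule (S : Subalgebra R A) (V : Submodule R A) :
    V ≤ V * Subalgebra.toSubmodule S :=
  fun x hx => mul_one x ▸ Submodule.mul_mem_mul hx (one_mem S)

section ImageOn

variable {B : Subalgebra R A} {φ : B →ₐ[R] C} {V V' : Submodule R A}

/-- The image `φ(V ∩ B)` of a submodule `V` of `A` under a homomorphism `φ` that is defined on the
subalgebra `B` only. -/
def imageOn (φ : B →ₐ[R] C) (V : Submodule R A) : Submodule R C :=
  (V.comap B.val.toLinearMap).map φ.toLinearMap

lemma imageOn_mul (h : V ≤ Subalgebra.toSubmodule B) (h' : V' ≤ Subalgebra.toSubmodule B) :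
    imageOn φ (V * V') = imageOn φ V * imageOn φ V' := by
  have hrange : LinearMap.range B.val.toLinearMap = Subalgebra.toSubmodule B :=
    Submodule.range_subtype (Subalgebra.toSubmodule B)
  have hcomap : (V * V').comap B.val.toLinearMap =
      V.comap B.val.toLinearMap * V'.comap B.val.toLinearMap := by
    rw [← Submodule.comap_map_eq_of_injective (f := B.val.toLinearMap) Subtype.val_injective
      (V.comap _ * V'.comap _), Submodule.map_mul, Submodule.map_comap_eq_of_le (hrange ▸ h),
      Submodule.map_comap_eq_of_le (hrange ▸ h')]
  rw [imageOn, hcomap, Submodule.map_mul, imageOn, imageOn]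

lemma imageOn_adjoin {T : Set A} (h : T ⊆ B) :
    imageOn φ (Subalgebra.toSubmodule (Algebra.adjoin R T)) =
      Subalgebra.toSubmodule (Algebra.adjoin R (φ '' (B.val ⁻¹' T))) := by
  have himage : B.val '' (B.val ⁻¹' T) = T :=
    Set.image_preimage_eq_of_subset fun t ht => ⟨⟨t, h ht⟩, rfl⟩
  have hcomap : (Algebra.adjoin R T).comap B.val = Algebra.adjoin R (B.val ⁻¹' T) := by
    refine Subalgebra.map_injective (f := B.val) Subtype.val_injective ?_
    rw [AlgHom.map_adjoin, himage, Subalgebra.map_comap_eq_self]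
    rwa [Subalgebra.range_val, Algebra.adjoin_le_iff]
  rw [← AlgHom.map_adjoin, ← hcomap]
  rfl

end ImageOn

variable {B₁ : Subalgebra R A₁} {B₂ : Subalgebra R A₂} {ψ : B₁ ⊗[R] B₂ →ₐ[R] C}
  {V₁ V₁' : Submodule R A₁} {V₂ V₂' : Submodule R A₂}

/-- The image `ψ(V₁ ⊗ V₂)` for `ψ` defined on `B₁ ⊗ B₂`, as the product of the commuting
submodules `ψ(V₁ ⊗ 1)` and `ψ(1 ⊗ V₂)`. -/
def tensorImage (ψ : B₁ ⊗[R] B₂ →ₐ[R] C) (V₁ : Submodule R A₁) (V₂ : Submodule R A₂) :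
    Submodule R C :=
  imageOn (ψ.comp Algebra.TensorProduct.includeLeft) V₁ *
    imageOn (ψ.comp Algebra.TensorProduct.includeRight) V₂

lemma map_tmul_eq_mul (X₁ : B₁) (X₂ : B₂) :
    ψ (X₁ ⊗ₜ[R] X₂) = ψ (X₁ ⊗ₜ[R] 1) * ψ (1 ⊗ₜ[R] X₂) := by
  rw [← map_mul, Algebra.TensorProduct.tmul_mul_tmul, mul_one, one_mul]

lemma commute_map_tmul_one (X₁ : B₁) (X₂ : B₂) :
    Commute (ψ (X₁ ⊗ₜ[R] 1)) (ψ (1 ⊗ₜ[R] X₂)) := by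
  rw [Commute, SemiconjBy, ← map_tmul_eq_mul, ← map_mul, Algebra.TensorProduct.tmul_mul_tmul,
    mul_one, one_mul]

lemma tmul_mem_tensorImage {X₁ : B₁} {X₂ : B₂} (h₁ : (X₁ : A₁) ∈ V₁) (h₂ : (X₂ : A₂) ∈ V₂) :
    ψ (X₁ ⊗ₜ[R] X₂) ∈ tensorImage ψ V₁ V₂ := by
  rw [map_tmul_eq_mul]
  exact Submodule.mul_mem_mul ⟨X₁, h₁, rfl⟩ ⟨X₂, h₂, rfl⟩

lemma tensorImage_le {S : Submodule R C} :
    tensorImage ψ V₁ V₂ ≤ S ↔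
      ∀ X₁ : B₁, (X₁ : A₁) ∈ V₁ → ∀ X₂ : B₂, (X₂ : A₂) ∈ V₂ → ψ (X₁ ⊗ₜ[R] X₂) ∈ S := by
  refine ⟨fun h X₁ h₁ X₂ h₂ => h (tmul_mem_tensorImage h₁ h₂), fun h => Submodule.mul_le.mpr ?_⟩
  rintro _ ⟨X₁, h₁, rfl⟩ _ ⟨X₂, h₂, rfl⟩
  exact map_tmul_eq_mul (ψ := ψ) X₁ X₂ ▸ h X₁ h₁ X₂ h₂

lemma tensorImage_mono (h₁ : V₁ ≤ V₁') (h₂ : V₂ ≤ V₂') :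
    tensorImage ψ V₁ V₂ ≤ tensorImage ψ V₁' V₂' :=
  tensorImage_le.mpr fun _ hX₁ _ hX₂ => tmul_mem_tensorImage (h₁ hX₁) (h₂ hX₂)

lemma tensorImage_mul (h₁ : V₁ ≤ Subalgebra.toSubmodule B₁)
    (h₁' : V₁' ≤ Subalgebra.toSubmodule B₁) (h₂ : V₂ ≤ Subalgebra.toSubmodule B₂)
    (h₂' : V₂' ≤ Subalgebra.toSubmodule B₂) :
    tensorImage ψ (V₁ * V₁') (V₂ * V₂') = tensorImage ψ V₁ V₂ * tensorImage ψ V₁' V₂' := by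
  have hcomm : imageOn (ψ.comp Algebra.TensorProduct.includeLeft) V₁' *
      imageOn (ψ.comp Algebra.TensorProduct.includeRight) V₂ =
      imageOn (ψ.comp Algebra.TensorProduct.includeRight) V₂ *
        imageOn (ψ.comp Algebra.TensorProduct.includeLeft) V₁' := by
    refine Submodule.mul_comm_of_commute ?_
    rintro _ ⟨X₁, -, rfl⟩ _ ⟨X₂, -, rfl⟩
    exact commute_map_tmul_one X₁ X₂
  simp only [tensorImage, imageOn_mul h₁ h₁', imageOn_mul h₂ h₂', mul_assoc]
  rw [← mul_assoc (imageOn _ V₁') (imageOn _ V₂), hcomm, mul_assoc]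

lemma tensorImage_adjoin {T₁ : Set A₁} {T₂ : Set A₂} (h₁ : T₁ ⊆ B₁) (h₂ : T₂ ⊆ B₂) :
    tensorImage ψ (Subalgebra.toSubmodule (Algebra.adjoin R T₁))
        (Subalgebra.toSubmodule (Algebra.adjoin R T₂)) =
      Subalgebra.toSubmodule (Algebra.adjoin R
        (ψ.comp Algebra.TensorProduct.includeLeft '' (B₁.val ⁻¹' T₁) ∪
          ψ.comp Algebra.TensorProduct.includeRight '' (B₂.val ⁻¹' T₂))) := by
  rw [tensorImage, imageOn_adjoin h₁, imageOn_adjoin h₂, Algebra.adjoin_union,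
    toSubmodule_sup_of_commute]
  rw [← AlgHom.map_adjoin, ← AlgHom.map_adjoin]
  rintro _ ⟨X₁, -, rfl⟩ _ ⟨X₂, -, rfl⟩
  exact commute_map_tmul_one X₁ X₂

lemma tensorImage_toSubmodule_self :
    tensorImage ψ (Subalgebra.toSubmodule B₁) (Subalgebra.toSubmodule B₂) =
      Subalgebra.toSubmodule ψ.range := by
  refine le_antisymm (tensorImage_le.mpr fun X₁ _ X₂ _ => ⟨_, rfl⟩) ?_
  rintro _ ⟨t, rfl⟩
  induction t with
  | zero => simp
  | tmul X₁ X₂ => exact tmul_mem_tensorImage X₁.2 X₂.2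
  | add s t hs ht => simpa using add_mem hs ht

section Restriction

variable {B₁' : Subalgebra R A₁} {B₂' : Subalgebra R A₂}

/-- The restriction of `ψ` along `B₁' ⊗ B₂' → B₁ ⊗ B₂`. -/
def tensorRestrict (ψ : B₁ ⊗[R] B₂ →ₐ[R] C) (h₁ : B₁' ≤ B₁) (h₂ : B₂' ≤ B₂) :
    B₁' ⊗[R] B₂' →ₐ[R] C :=
  ψ.comp (Algebra.TensorProduct.map (Subalgebra.inclusion h₁) (Subalgebra.inclusion h₂))

lemma tensorRestrict_tmul (h₁ : B₁' ≤ B₁) (h₂ : B₂' ≤ B₂) (X₁ : B₁') (X₂ : B₂') :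
    tensorRestrict ψ h₁ h₂ (X₁ ⊗ₜ[R] X₂) =
      ψ (Subalgebra.inclusion h₁ X₁ ⊗ₜ[R] Subalgebra.inclusion h₂ X₂) := rfl

lemma tensorImage_tensorRestrict (h₁ : B₁' ≤ B₁) (h₂ : B₂' ≤ B₂)
    (hV₁ : V₁ ≤ Subalgebra.toSubmodule B₁') (hV₂ : V₂ ≤ Subalgebra.toSubmodule B₂') :
    tensorImage (tensorRestrict ψ h₁ h₂) V₁ V₂ = tensorImage ψ V₁ V₂ := by
  refine le_antisymm (tensorImage_le.mpr fun X₁ hX₁ X₂ hX₂ => ?_)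
    (tensorImage_le.mpr fun X₁ hX₁ X₂ hX₂ => ?_)
  · rw [tensorRestrict_tmul]
    exact tmul_mem_tensorImage hX₁ hX₂
  · exact tmul_mem_tensorImage (ψ := tensorRestrict ψ h₁ h₂) (X₁ := ⟨X₁, hV₁ hX₁⟩)
      (X₂ := ⟨X₂, hV₂ hX₂⟩) hX₁ hX₂

end Restriction

end TensorImage

section SkewMonoidRing

variable {L : Type*} [Field L] [Algebra ℂ L]

lemma gen_apply (f : L) (w : L ≃ₐ[ℂ] L) (x : L) : gen f w x = f * w x := rfl

lemma gen_mul_gen (f g : L) (v w : L ≃ₐ[ℂ] L) :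
    gen f v * gen g w = gen (f * v g) (v * w) := by
  ext x
  simp only [Module.End.mul_apply, gen_apply, map_mul, AlgEquiv.mul_apply, mul_assoc]

lemma gen_one_one : gen (1 : L) 1 = 1 := by
  ext x
  exact one_mul x

lemma gen_zero (w : L ≃ₐ[ℂ] L) : gen (0 : L) w = 0 := by
  ext x
  exact zero_mul (w x)

lemma gen_smul (c : ℂ) (f : L) (w : L ≃ₐ[ℂ] L) : gen (c • f) w = c • gen f w := by
  ext x
  exact smul_mul_assoc c f (w x)

lemma gen_eq_gen_one_mul (f : L) (w : L ≃ₐ[ℂ] L) : gen f w = gen f 1 * gen 1 w := by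
  rw [gen_mul_gen, one_mul, map_one, mul_one]

lemma gen_eq_mul_gen_one (f : L) (w : L ≃ₐ[ℂ] L) : gen f w = gen 1 w * gen (w⁻¹ f) 1 := by
  rw [gen_mul_gen, one_mul, mul_one, ← AlgEquiv.mul_apply, mul_inv_cancel, AlgEquiv.one_apply]

lemma skew_mono {V W : Submonoid (L ≃ₐ[ℂ] L)} (h : V ≤ W) : skew V ≤ skew W := by
  refine Algebra.adjoin_mono ?_
  rintro _ ⟨f, w, hw, rfl⟩
  exact ⟨f, w, h hw, rfl⟩

lemma toSubmodule_skew (M : Submonoid (L ≃ₐ[ℂ] L)) :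
    Subalgebra.toSubmodule (skew M) =
      Submodule.span ℂ {X | ∃ (f : L) (w : L ≃ₐ[ℂ] L), w ∈ M ∧ X = gen f w} := by
  let S : Submonoid (Module.End ℂ L) :=
    { carrier := {X | ∃ (f : L) (w : L ≃ₐ[ℂ] L), w ∈ M ∧ X = gen f w}
      one_mem' := ⟨1, 1, one_mem M, gen_one_one.symm⟩
      mul_mem' := by
        rintro _ _ ⟨f, v, hv, rfl⟩ ⟨g, w, hw, rfl⟩
        exact ⟨f * v g, v * w, mul_mem hv hw, gen_mul_gen f g v w⟩ }
  rw [skew, Algebra.adjoin_eq_span]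
  exact congrArg (Submodule.span ℂ) (congrArg SetLike.coe S.closure_eq)

lemma skew_induction {M : Submonoid (L ≃ₐ[ℂ] L)} {p : skew M → Prop}
    (gen : ∀ f w (hw : w ∈ M), p ⟨gen f w, gen_mem_skew f hw⟩)
    (add : ∀ X Y, p X → p Y → p (X + Y)) (X : skew M) : p X := by
  obtain ⟨X, hX⟩ := X
  have hspan := hX
  rw [← Subalgebra.mem_toSubmodule, toSubmodule_skew] at hspan
  induction hspan using Submodule.closure_induction with
  | zero => simpa only [gen_zero] using gen 0 1 (one_mem M)
  | add X Y hX' hY' ihX ihY =>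
    rw [← toSubmodule_skew] at hX' hY'
    exact add _ _ (ihX hX') (ihY hY')
  | smul_mem c X hgen =>
    obtain ⟨f, w, hw, rfl⟩ := hgen
    simpa only [gen_smul] using gen (c • f) w hw

/-- The algebra of multiplication operators `m_γ`, `γ ∈ Γ`: the set `gammaMulSet Γ` with its
algebra structure. -/
def mulOps (Γ : Subalgebra ℂ L) : Subalgebra ℂ (Module.End ℂ L) :=
  Γ.map (Algebra.lmul ℂ L)

lemma gen_mem_mulOps {Γ : Subalgebra ℂ L} {γ : L} (h : γ ∈ Γ) : gen γ 1 ∈ mulOps Γ :=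
  ⟨γ, h, rfl⟩

lemma coe_mulOps (Γ : Subalgebra ℂ L) : (mulOps Γ : Set (Module.End ℂ L)) = gammaMulSet Γ := by
  ext X
  exact exists_congr fun γ => and_congr_right fun _ => eq_comm

lemma adjoin_gammaMulSet (Γ : Subalgebra ℂ L) :
    Algebra.adjoin ℂ (gammaMulSet Γ) = mulOps Γ := by
  rw [← coe_mulOps, Algebra.adjoin_eq]

lemma mulOps_mono {Γ Γ' : Subalgebra ℂ L} (h : Γ ≤ Γ') : mulOps Γ ≤ mulOps Γ' :=
  Subalgebra.map_mono h

lemma mulOps_sup (Γ Γ' : Subalgebra ℂ L) : mulOps (Γ ⊔ Γ') = mulOps Γ ⊔ mulOps Γ' :=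
  Algebra.map_sup _ _ _

lemma gammaMulSet_subset_skew (Γ : Subalgebra ℂ L) (M : Submonoid (L ≃ₐ[ℂ] L)) :
    gammaMulSet Γ ⊆ skew M := by
  rintro _ ⟨γ, -, rfl⟩
  exact gen_mem_skew γ (one_mem M)

lemma mulOps_le_skew (Γ : Subalgebra ℂ L) (M : Submonoid (L ≃ₐ[ℂ] L)) : mulOps Γ ≤ skew M := by
  rw [← SetLike.coe_subset_coe, coe_mulOps]
  exact gammaMulSet_subset_skew Γ M

lemma coe_closure_gammaMulSet_union (Γ : Subalgebra ℂ L) (s : Set (Module.End ℂ L)) :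
    (Subring.closure (gammaMulSet Γ ∪ s) : Set (Module.End ℂ L)) =
      Algebra.adjoin ℂ (gammaMulSet Γ ∪ s) := by
  have hscalars : Set.range (algebraMap ℂ (Module.End ℂ L)) ⊆ gammaMulSet Γ := by
    rintro _ ⟨c, rfl⟩
    rw [← coe_mulOps]
    exact algebraMap_mem _ c
  rw [← Subalgebra.coe_toSubring, Algebra.adjoin_eq_ring_closure, ← Set.union_assoc,
    Set.union_eq_self_of_subset_left hscalars]

lemma span_leftMulSet (W : Subgroup (L ≃ₐ[ℂ] L)) (V : Submodule ℂ (Module.End ℂ L)) :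
    Submodule.span ℂ (leftMulSet (fixedSet W) (V : Set (Module.End ℂ L))) =
      Subalgebra.toSubmodule (mulOps (fixedSub ⊤ W)) * V := by
  rw [Submodule.mul_eq_span_mul_set]
  congr 1
  ext Z
  constructor
  · rintro ⟨k, hk, X, hX, rfl⟩
    exact ⟨_, gen_mem_mulOps ⟨trivial, hk⟩, X, hX, rfl⟩
  · rintro ⟨_, ⟨k, hk, rfl⟩, X, hX, rfl⟩
    exact ⟨k, hk.2, X, hX, rfl⟩

lemma span_rightMulSet (W : Subgroup (L ≃ₐ[ℂ] L)) (V : Submodule ℂ (Module.End ℂ L)) :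
    Submodule.span ℂ (rightMulSet (fixedSet W) (V : Set (Module.End ℂ L))) =
      V * Subalgebra.toSubmodule (mulOps (fixedSub ⊤ W)) := by
  rw [Submodule.mul_eq_span_mul_set]
  congr 1
  ext Z
  constructor
  · rintro ⟨k, hk, X, hX, rfl⟩
    exact ⟨X, hX, _, gen_mem_mulOps ⟨trivial, hk⟩, rfl⟩
  · rintro ⟨X, hX, _, ⟨k, hk, rfl⟩, rfl⟩
    exact ⟨k, hk.2, X, hX, rfl⟩

end SkewMonoidRing

section Conjugation

variable {L : Type*} [Field L] [Algebra ℂ L]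

/-- Conjugation `X ↦ w X w⁻¹` on `End_ℂ(L)`. -/
def conj (w : L ≃ₐ[ℂ] L) : Module.End ℂ L ≃ₐ[ℂ] Module.End ℂ L :=
  w.toLinearEquiv.conjAlgEquiv ℂ

lemma conj_apply (w : L ≃ₐ[ℂ] L) (X : Module.End ℂ L) :
    conj w X = gen 1 w * X * gen 1 w⁻¹ := by
  ext x
  simp only [Module.End.mul_apply, gen_apply, one_mul]
  rfl

lemma conj_gen (w : L ≃ₐ[ℂ] L) (f : L) (v : L ≃ₐ[ℂ] L) :
    conj w (gen f v) = gen (w f) (w * v * w⁻¹) := by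
  rw [conj_apply, gen_mul_gen, gen_mul_gen, one_mul, map_one, mul_one]

lemma conj_mul_apply (v w : L ≃ₐ[ℂ] L) (X : Module.End ℂ L) :
    conj (v * w) X = conj v (conj w X) := rfl

lemma mem_conjInv {M : Submonoid (L ≃ₐ[ℂ] L)} {W : Subgroup (L ≃ₐ[ℂ] L)} {X : Module.End ℂ L} :
    X ∈ conjInv M W ↔ X ∈ skew M ∧ ∀ w ∈ W, conj w X = X := by
  simp only [conj_apply]
  rfl

/-- The algebra `𝒦 = (L # M)^W`: the set `conjInv M W` with its algebra structure. -/
def conjInvariants (M : Submonoid (L ≃ₐ[ℂ] L)) (W : Subgroup (L ≃ₐ[ℂ] L)) :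
    Subalgebra ℂ (Module.End ℂ L) where
  carrier := conjInv M W
  mul_mem' hX hY := by
    rw [mem_conjInv] at hX hY ⊢
    exact ⟨mul_mem hX.1 hY.1, fun w hw => by rw [map_mul, hX.2 w hw, hY.2 w hw]⟩
  add_mem' hX hY := by
    rw [mem_conjInv] at hX hY ⊢
    exact ⟨add_mem hX.1 hY.1, fun w hw => by rw [map_add, hX.2 w hw, hY.2 w hw]⟩
  algebraMap_mem' c := mem_conjInv.mpr ⟨algebraMap_mem _ c, fun w _ => (conj w).commutes c⟩

lemma conjInv_eq_span_leftMulSet_iff {M : Submonoid (L ≃ₐ[ℂ] L)} {W : Subgroup (L ≃ₐ[ℂ] L)}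
    {V : Submodule ℂ (Module.End ℂ L)} :
    conjInv M W = ↑(Submodule.span ℂ (leftMulSet (fixedSet W) (V : Set (Module.End ℂ L)))) ↔
      Subalgebra.toSubmodule (conjInvariants M W) =
        Subalgebra.toSubmodule (mulOps (fixedSub ⊤ W)) * V := by
  rw [← span_leftMulSet]
  exact SetLike.coe_set_eq (p := Subalgebra.toSubmodule (conjInvariants M W))

lemma conjInv_eq_span_rightMulSet_iff {M : Submonoid (L ≃ₐ[ℂ] L)} {W : Subgroup (L ≃ₐ[ℂ] L)}
    {V : Submodule ℂ (Module.End ℂ L)} :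
    conjInv M W = ↑(Submodule.span ℂ (rightMulSet (fixedSet W) (V : Set (Module.End ℂ L)))) ↔
      Subalgebra.toSubmodule (conjInvariants M W) =
        V * Subalgebra.toSubmodule (mulOps (fixedSub ⊤ W)) := by
  rw [← span_rightMulSet]
  exact SetLike.coe_set_eq (p := Subalgebra.toSubmodule (conjInvariants M W))

lemma conjInvariants_le_skew (M : Submonoid (L ≃ₐ[ℂ] L)) (W : Subgroup (L ≃ₐ[ℂ] L)) :
    conjInvariants M W ≤ skew M :=
  fun _ hX => hX.1

lemma mulOps_fixedSub_le_conjInvariants (M : Submonoid (L ≃ₐ[ℂ] L))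
    (W : Subgroup (L ≃ₐ[ℂ] L)) : mulOps (fixedSub ⊤ W) ≤ conjInvariants M W := by
  rintro _ ⟨k, hk, rfl⟩
  refine mem_conjInv.mpr ⟨gen_mem_skew k (one_mem M), fun w hw => ?_⟩
  refine (conj_gen w k 1).trans ?_
  rw [hk.2 w hw, mul_one, mul_inv_cancel]
  rfl

lemma conj_mem_skew {M : Submonoid (L ≃ₐ[ℂ] L)} {w : L ≃ₐ[ℂ] L}
    (hw : ∀ μ ∈ M, w * μ * w⁻¹ ∈ M) {X : Module.End ℂ L} (hX : X ∈ skew M) :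
    conj w X ∈ skew M := by
  suffices h : skew M ≤ (skew M).comap (conj w).toAlgHom from h hX
  refine Algebra.adjoin_le ?_
  rintro _ ⟨f, μ, hμ, rfl⟩
  change conj w (gen f μ) ∈ skew M
  rw [conj_gen]
  exact gen_mem_skew (w f) (hw μ hμ)

/-- Conjugation by `w` as an endomorphism of `L # M`, for `w` normalizing `M`. -/
def conjSkew {M : Submonoid (L ≃ₐ[ℂ] L)} (w : L ≃ₐ[ℂ] L) (hw : ∀ μ ∈ M, w * μ * w⁻¹ ∈ M) :
    skew M →ₐ[ℂ] skew M :=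
  ((conj w).toAlgHom.comp (skew M).val).codRestrict (skew M) fun X => conj_mem_skew hw X.2

lemma conjSkew_gen {M : Submonoid (L ≃ₐ[ℂ] L)} {w v : L ≃ₐ[ℂ] L}
    (hw : ∀ μ ∈ M, w * μ * w⁻¹ ∈ M) (f : L) (hv : v ∈ M) :
    conjSkew w hw ⟨gen f v, gen_mem_skew f hv⟩ =
      ⟨gen (w f) (w * v * w⁻¹), gen_mem_skew (w f) (hw v hv)⟩ :=
  Subtype.ext (conj_gen w f v)

lemma conj_eq_of_mem_mulOps_fixedSub {G : Type*} [Group G] (ρ : G →* (L ≃ₐ[ℂ] L))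
    {Y : Module.End ℂ L} (hY : Y ∈ mulOps (fixedSub ⊤ ρ.range)) (g : G) : conj (ρ g) Y = Y :=
  (mem_conjInv.mp (mulOps_fixedSub_le_conjInvariants ⊤ ρ.range hY)).2 _ ⟨g, rfl⟩

section Trace

variable {G : Type*} [Group G] [Fintype G] (ρ : G →* (L ≃ₐ[ℂ] L))

/-- The sum of the conjugates of an operator under a finite group `G` acting through `ρ`. The sum
runs over `G` and not over `ρ.range`, so that the trace over a product group factors. -/
def conjTrace : Module.End ℂ L →ₗ[ℂ] Module.End ℂ L :=
  ∑ g, (conj (ρ g)).toLinearMap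

lemma conjTrace_apply (X : Module.End ℂ L) : conjTrace ρ X = ∑ g, conj (ρ g) X := by
  simp only [conjTrace, LinearMap.sum_apply, AlgEquiv.toLinearMap_apply]

lemma conj_conjTrace (g : G) (X : Module.End ℂ L) :
    conj (ρ g) (conjTrace ρ X) = conjTrace ρ X := by
  simp only [conjTrace_apply, map_sum, ← conj_mul_apply, ← map_mul]
  exact Fintype.sum_equiv (Equiv.mulLeft g) _ _ fun _ => rfl

lemma conjTrace_mem_conjInvariants {M : Submonoid (L ≃ₐ[ℂ] L)}
    (hρ : ∀ g, ∀ μ ∈ M, ρ g * μ * (ρ g)⁻¹ ∈ M) {X : Module.End ℂ L} (hX : X ∈ skew M) :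
    conjTrace ρ X ∈ conjInvariants M ρ.range := by
  refine mem_conjInv.mpr ⟨?_, ?_⟩
  · rw [conjTrace_apply]
    exact sum_mem fun g _ => conj_mem_skew (hρ g) hX
  · rintro _ ⟨g, rfl⟩
    exact conj_conjTrace ρ g X

lemma conjTrace_of_mem_conjInvariants {M : Submonoid (L ≃ₐ[ℂ] L)} {X : Module.End ℂ L}
    (hX : X ∈ conjInvariants M ρ.range) : conjTrace ρ X = Fintype.card G • X := by
  rw [conjTrace_apply, Finset.sum_congr rfl fun g _ => (mem_conjInv.mp hX).2 _ ⟨g, rfl⟩,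
    Finset.sum_const, Finset.card_univ]

lemma sum_conjSkew_mem_conjInvariants {M : Submonoid (L ≃ₐ[ℂ] L)} {W : Subgroup (L ≃ₐ[ℂ] L)}
    [Fintype W] (hW : ∀ w ∈ W, ∀ μ ∈ M, w * μ * w⁻¹ ∈ M) (X : skew M) :
    ((∑ g : W, conjSkew g.1 (hW g.1 g.2) X : skew M) : Module.End ℂ L) ∈ conjInvariants M W := by
  have htrace : ((∑ g : W, conjSkew g.1 (hW g.1 g.2) X : skew M) : Module.End ℂ L) =
      conjTrace W.subtype X := by
    rw [conjTrace_apply, AddSubmonoidClass.coe_finsetSum]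
    rfl
  rw [htrace]
  simpa only [Subgroup.range_subtype] using
    conjTrace_mem_conjInvariants W.subtype (fun g => hW g.1 g.2) X.2

lemma conjInvariants_le_map_conjTrace (M : Submonoid (L ≃ₐ[ℂ] L)) :
    Subalgebra.toSubmodule (conjInvariants M ρ.range) ≤
      (Subalgebra.toSubmodule (skew M)).map (conjTrace ρ) := by
  intro X hX
  have hcard : (Fintype.card G : ℂ) ≠ 0 := Nat.cast_ne_zero.mpr Fintype.card_ne_zero
  refine ⟨(Fintype.card G : ℂ)⁻¹ • X, Subalgebra.smul_mem _ hX.1 _, ?_⟩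
  rw [map_smul, conjTrace_of_mem_conjInvariants ρ hX, ← Nat.cast_smul_eq_nsmul ℂ, smul_smul,
    inv_mul_cancel₀ hcard, one_smul]

variable {S V : Submodule ℂ (Module.End ℂ L)}

lemma map_conjTrace_mul_left (hS : ∀ Y ∈ S, ∀ g, conj (ρ g) Y = Y) :
    (S * V).map (conjTrace ρ) ≤ S * V.map (conjTrace ρ) := by
  refine Submodule.map_le_iff_le_comap.mpr (Submodule.mul_le.mpr fun Y hY X hX => ?_)
  have hYX : conjTrace ρ (Y * X) = Y * conjTrace ρ X := by
    simp only [conjTrace_apply, map_mul, hS Y hY, Finset.mul_sum]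
  exact Submodule.mem_comap.mpr
    (hYX ▸ Submodule.mul_mem_mul hY (Submodule.mem_map_of_mem hX))

lemma map_conjTrace_mul_right (hS : ∀ Y ∈ S, ∀ g, conj (ρ g) Y = Y) :
    (V * S).map (conjTrace ρ) ≤ V.map (conjTrace ρ) * S := by
  refine Submodule.map_le_iff_le_comap.mpr (Submodule.mul_le.mpr fun X hX Y hY => ?_)
  have hXY : conjTrace ρ (X * Y) = conjTrace ρ X * Y := by
    simp only [conjTrace_apply, map_mul, hS Y hY, Finset.sum_mul]
  exact Submodule.mem_comap.mpr
    (hXY ▸ Submodule.mul_mem_mul (Submodule.mem_map_of_mem hX) hY)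

end Trace

end Conjugation

/-- `U` is a principal Galois `Γ`-order in `𝒦 = (L # M)^W`: a finitely generated `Γ`-subring of
`𝒦` with `K U = U K = 𝒦` for `K = L^W`, whose elements map `Γ` into itself. -/
structure IsPrincipalGaloisOrder {L : Type*} [Field L] [Algebra ℂ L] (Γ : Subalgebra ℂ L)
    (M : Submonoid (L ≃ₐ[ℂ] L)) (W : Subgroup (L ≃ₐ[ℂ] L)) (U : Set (Module.End ℂ L)) :
    Prop where
  subset_conjInv : U ⊆ conjInv M W
  gammaMulSet_subset : gammaMulSet Γ ⊆ U
  exists_finset_closure : ∃ s : Finset (Module.End ℂ L), ↑s ⊆ U ∧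
    U = ↑(Subring.closure (gammaMulSet Γ ∪ ↑s))
  conjInv_eq_left : conjInv M W = ↑(Submodule.span ℂ (leftMulSet (fixedSet W) U))
  conjInv_eq_right : conjInv M W = ↑(Submodule.span ℂ (rightMulSet (fixedSet W) U))
  apply_mem : ∀ X ∈ U, ∀ γ ∈ Γ, X γ ∈ Γ

section PrincipalGaloisOrder

variable {L : Type*} [Field L] [Algebra ℂ L] {Γ : Subalgebra ℂ L} {M : Submonoid (L ≃ₐ[ℂ] L)}
  {W : Subgroup (L ≃ₐ[ℂ] L)}

lemma isPrincipalGaloisOrder_adjoin_iff {s : Finset (Module.End ℂ L)} :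
    IsPrincipalGaloisOrder Γ M W (Algebra.adjoin ℂ (gammaMulSet Γ ∪ s)) ↔
      Subalgebra.toSubmodule (conjInvariants M W) =
        Subalgebra.toSubmodule (mulOps (fixedSub ⊤ W)) *
          Subalgebra.toSubmodule (Algebra.adjoin ℂ (gammaMulSet Γ ∪ s)) ∧
      Subalgebra.toSubmodule (conjInvariants M W) =
        Subalgebra.toSubmodule (Algebra.adjoin ℂ (gammaMulSet Γ ∪ s)) *
          Subalgebra.toSubmodule (mulOps (fixedSub ⊤ W)) ∧
      ∀ X ∈ Algebra.adjoin ℂ (gammaMulSet Γ ∪ s), ∀ γ ∈ Γ, X γ ∈ Γ := by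
  rw [← conjInv_eq_span_leftMulSet_iff, ← conjInv_eq_span_rightMulSet_iff]
  refine ⟨fun h => ⟨h.conjInv_eq_left, h.conjInv_eq_right, h.apply_mem⟩,
    fun ⟨hleft, hright, happly⟩ => ⟨?_, ?_, ⟨s, ?_, ?_⟩, hleft, hright, happly⟩⟩
  · intro X hX
    refine hleft.ge (Submodule.subset_span ⟨1, fun w _ => map_one w, X, hX, ?_⟩)
    ext x
    exact (one_mul (X x)).symm
  · exact Set.subset_union_left.trans Algebra.subset_adjoin
  · exact Set.subset_union_right.trans Algebra.subset_adjoin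
  · exact (coe_closure_gammaMulSet_union Γ s).symm

lemma IsPrincipalGaloisOrder.exists_eq_adjoin {U : Set (Module.End ℂ L)}
    (hU : IsPrincipalGaloisOrder Γ M W U) : ∃ s : Finset (Module.End ℂ L),
      (s : Set (Module.End ℂ L)) ⊆ skew M ∧ U = Algebra.adjoin ℂ (gammaMulSet Γ ∪ s) := by
  obtain ⟨s, hs, hclosure⟩ := hU.exists_finset_closure
  exact ⟨s, fun X hX => (hU.subset_conjInv (hs hX)).1,
    hclosure.trans (coe_closure_gammaMulSet_union Γ s)⟩

end PrincipalGaloisOrder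

section FixedDenominators

variable {L : Type*} [Field L] [Algebra ℂ L]

lemma exists_div_eq_fixed_mul {G : Type*} [Group G] [Finite G] (ρ : G →* (L ≃ₐ[ℂ] L))
    {A : Subalgebra ℂ L} (hA : ∀ g, ∀ x ∈ A, ρ g x ∈ A) {a b : L} (ha : a ∈ A) (hb : b ∈ A)
    (hb0 : b ≠ 0) : ∃ k ∈ fixedSub ⊤ ρ.range, ∃ t ∈ A, a / b = k * t := by
  classical
  cases nonempty_fintype G
  have hnorm : (∏ g, ρ g b) = b * ∏ g ∈ Finset.univ.erase 1, ρ g b := by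
    rw [← Finset.mul_prod_erase _ _ (Finset.mem_univ 1), map_one, AlgEquiv.one_apply]
  have hnorm0 : (∏ g, ρ g b) ≠ 0 :=
    Finset.prod_ne_zero_iff.mpr fun g _ => (map_ne_zero (ρ g)).mpr hb0
  have hfixed : ∀ w ∈ ρ.range, w (∏ g, ρ g b)⁻¹ = (∏ g, ρ g b)⁻¹ := by
    rintro _ ⟨h, rfl⟩
    rw [map_inv₀, map_prod]
    congr 1
    refine Fintype.prod_equiv (Equiv.mulLeft h) _ _ fun g => ?_
    rw [Equiv.coe_mulLeft, map_mul, AlgEquiv.mul_apply]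
  refine ⟨(∏ g, ρ g b)⁻¹, ⟨trivial, hfixed⟩, a * ∏ g ∈ Finset.univ.erase 1, ρ g b,
    mul_mem ha (prod_mem fun g _ => hA g b hb), ?_⟩
  rw [hnorm] at hnorm0 ⊢
  have := right_ne_zero_of_mul hnorm0
  field_simp

end FixedDenominators

section Product

variable {L₁ L₂ L : Type*} [Field L₁] [Algebra ℂ L₁] [Field L₂] [Algebra ℂ L₂]
  [Field L] [Algebra ℂ L] {ι₁ : L₁ →ₐ[ℂ] L} {ι₂ : L₂ →ₐ[ℂ] L}
  {ext : ((L₁ ≃ₐ[ℂ] L₁) × (L₂ ≃ₐ[ℂ] L₂)) →* (L ≃ₐ[ℂ] L)}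
  {W₁ : Subgroup (L₁ ≃ₐ[ℂ] L₁)} {W₂ : Subgroup (L₂ ≃ₐ[ℂ] L₂)}
  {M₁ N₁ : Submonoid (L₁ ≃ₐ[ℂ] L₁)} {M₂ N₂ : Submonoid (L₂ ≃ₐ[ℂ] L₂)}

lemma tensorSub_eq_sup (Γ₁ : Subalgebra ℂ L₁) (Γ₂ : Subalgebra ℂ L₂) :
    tensorSub Γ₁ Γ₂ ι₁ ι₂ = Γ₁.map ι₁ ⊔ Γ₂.map ι₂ := by
  rw [tensorSub, Algebra.adjoin_union, ← AlgHom.map_adjoin, ← AlgHom.map_adjoin,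
    Algebra.adjoin_eq, Algebra.adjoin_eq]

lemma tensorSub_mono {Γ₁ Γ₁' : Subalgebra ℂ L₁} {Γ₂ Γ₂' : Subalgebra ℂ L₂} (h₁ : Γ₁ ≤ Γ₁')
    (h₂ : Γ₂ ≤ Γ₂') : tensorSub Γ₁ Γ₂ ι₁ ι₂ ≤ tensorSub Γ₁' Γ₂' ι₁ ι₂ :=
  Algebra.adjoin_mono (Set.union_subset_union (Set.image_mono h₁) (Set.image_mono h₂))

lemma mul_mem_tensorSub {Γ₁ : Subalgebra ℂ L₁} {Γ₂ : Subalgebra ℂ L₂} {a : L₁} {b : L₂}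
    (ha : a ∈ Γ₁) (hb : b ∈ Γ₂) : ι₁ a * ι₂ b ∈ tensorSub Γ₁ Γ₂ ι₁ ι₂ :=
  mul_mem (Algebra.subset_adjoin (.inl ⟨a, ha, rfl⟩)) (Algebra.subset_adjoin (.inr ⟨b, hb, rfl⟩))

lemma tensorSub_induction {Γ₁ : Subalgebra ℂ L₁} {Γ₂ : Subalgebra ℂ L₂} {p : L → Prop}
    (mul : ∀ a ∈ Γ₁, ∀ b ∈ Γ₂, p (ι₁ a * ι₂ b)) (add : ∀ x y, p x → p y → p (x + y)) {x : L}
    (hx : x ∈ tensorSub Γ₁ Γ₂ ι₁ ι₂) : p x := by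
  rw [tensorSub_eq_sup, ← Subalgebra.mem_toSubmodule, ← Subalgebra.mul_toSubmodule] at hx
  refine Submodule.mul_induction_on hx ?_ add
  rintro _ ⟨a, ha, rfl⟩ _ ⟨b, hb, rfl⟩
  exact mul a ha b hb

/-- `ext p` extends the automorphism `p.1 ⊗ p.2` of `L₁ ⊗ L₂` to the field `L` containing it. -/
def IsProductExtension (ι₁ : L₁ →ₐ[ℂ] L) (ι₂ : L₂ →ₐ[ℂ] L)
    (ext : ((L₁ ≃ₐ[ℂ] L₁) × (L₂ ≃ₐ[ℂ] L₂)) →* (L ≃ₐ[ℂ] L)) : Prop :=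
  ∀ (p : (L₁ ≃ₐ[ℂ] L₁) × (L₂ ≃ₐ[ℂ] L₂)) (f : L₁) (g : L₂),
    ext p (ι₁ f * ι₂ g) = ι₁ (p.1 f) * ι₂ (p.2 g)

namespace IsProductExtension

lemma apply_left (hext : IsProductExtension ι₁ ι₂ ext) (p : (L₁ ≃ₐ[ℂ] L₁) × (L₂ ≃ₐ[ℂ] L₂))
    (f : L₁) : ext p (ι₁ f) = ι₁ (p.1 f) := by
  simpa only [map_one, mul_one] using hext p f 1

lemma apply_right (hext : IsProductExtension ι₁ ι₂ ext) (p : (L₁ ≃ₐ[ℂ] L₁) × (L₂ ≃ₐ[ℂ] L₂))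
    (g : L₂) : ext p (ι₂ g) = ι₂ (p.2 g) := by
  simpa only [map_one, one_mul] using hext p 1 g

lemma map_mem_tensorSub_top (hext : IsProductExtension ι₁ ι₂ ext)
    (p : (L₁ ≃ₐ[ℂ] L₁) × (L₂ ≃ₐ[ℂ] L₂)) {x : L} (hx : x ∈ tensorSub ⊤ ⊤ ι₁ ι₂) :
    ext p x ∈ tensorSub ⊤ ⊤ ι₁ ι₂ := by
  refine tensorSub_induction (p := fun x => ext p x ∈ tensorSub ⊤ ⊤ ι₁ ι₂)
    (fun a _ b _ => ?_) (fun x y hx hy => ?_) hx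
  · exact hext p a b ▸ mul_mem_tensorSub trivial trivial
  · exact map_add (ext p) x y ▸ add_mem hx hy

lemma tensorSub_fixedSub_le (hext : IsProductExtension ι₁ ι₂ ext) :
    tensorSub (fixedSub ⊤ W₁) (fixedSub ⊤ W₂) ι₁ ι₂ ≤
      fixedSub ⊤ (Subgroup.map ext (W₁.prod W₂)) := by
  rw [tensorSub, Algebra.adjoin_le_iff, Set.union_subset_iff]
  constructor
  · rintro _ ⟨a, ha, rfl⟩
    refine ⟨trivial, ?_⟩
    rintro _ ⟨p, hp, rfl⟩
    rw [hext.apply_left, ha.2 p.1 hp.1]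
  · rintro _ ⟨b, hb, rfl⟩
    refine ⟨trivial, ?_⟩
    rintro _ ⟨p, hp, rfl⟩
    rw [hext.apply_right, hb.2 p.2 hp.2]

end IsProductExtension

/-- The action of `W₁ × W₂` on `L` through `ext`. -/
def prodAction (ext : ((L₁ ≃ₐ[ℂ] L₁) × (L₂ ≃ₐ[ℂ] L₂)) →* (L ≃ₐ[ℂ] L))
    (W₁ : Subgroup (L₁ ≃ₐ[ℂ] L₁)) (W₂ : Subgroup (L₂ ≃ₐ[ℂ] L₂)) : W₁ × W₂ →* (L ≃ₐ[ℂ] L) :=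
  ext.comp (W₁.subtype.prodMap W₂.subtype)

lemma range_prodAction : (prodAction ext W₁ W₂).range = Subgroup.map ext (W₁.prod W₂) := by
  rw [prodAction, MonoidHom.range_comp, MonoidHom.range_prodMap, Subgroup.range_subtype,
    Subgroup.range_subtype]

/-- `ψ` is given on generators by `m_a w₁ ⊗ m_b w₂ ↦ m_{a ⊗ b} (w₁ ⊗ w₂)`, where `ext (w₁, w₂)`
plays the role of `w₁ ⊗ w₂`. -/
def IsProductEmbedding (ι₁ : L₁ →ₐ[ℂ] L) (ι₂ : L₂ →ₐ[ℂ] L)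
    (ext : ((L₁ ≃ₐ[ℂ] L₁) × (L₂ ≃ₐ[ℂ] L₂)) →* (L ≃ₐ[ℂ] L))
    (ψ : (skew N₁ ⊗[ℂ] skew N₂) →ₐ[ℂ] Module.End ℂ L) : Prop :=
  ∀ (a : L₁) (b : L₂) (w₁ : L₁ ≃ₐ[ℂ] L₁) (w₂ : L₂ ≃ₐ[ℂ] L₂) (h₁ : w₁ ∈ N₁) (h₂ : w₂ ∈ N₂),
    ψ (⟨gen a w₁, gen_mem_skew a h₁⟩ ⊗ₜ[ℂ] ⟨gen b w₂, gen_mem_skew b h₂⟩)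
      = gen (ι₁ a * ι₂ b) (ext (w₁, w₂))

lemma map_pureSpan (ψ : (skew N₁ ⊗[ℂ] skew N₂) →ₐ[ℂ] Module.End ℂ L)
    (V₁ : Submodule ℂ (Module.End ℂ L₁)) (V₂ : Submodule ℂ (Module.End ℂ L₂)) :
    Submodule.map ψ.toLinearMap (pureSpan N₁ N₂ V₁ V₂) = tensorImage ψ V₁ V₂ := by
  refine le_antisymm ?_ (tensorImage_le.mpr fun X₁ h₁ X₂ h₂ =>
    Submodule.mem_map_of_mem (Submodule.subset_span ⟨X₁, X₂, h₁, h₂, rfl⟩))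
  rw [pureSpan, Submodule.map_span_le]
  rintro _ ⟨X₁, X₂, h₁, h₂, rfl⟩
  exact tmul_mem_tensorImage h₁ h₂

namespace IsProductEmbedding

lemma restrict {ψ : (skew N₁ ⊗[ℂ] skew N₂) →ₐ[ℂ] Module.End ℂ L}
    (hψ : IsProductEmbedding ι₁ ι₂ ext ψ) (h₁ : M₁ ≤ N₁) (h₂ : M₂ ≤ N₂) :
    IsProductEmbedding ι₁ ι₂ ext (tensorRestrict ψ (skew_mono h₁) (skew_mono h₂)) :=
  fun a b w₁ w₂ hw₁ hw₂ => (tensorRestrict_tmul _ _ _ _).trans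
    (hψ a b w₁ w₂ (h₁ hw₁) (h₂ hw₂))

variable {ψ : (skew M₁ ⊗[ℂ] skew M₂) →ₐ[ℂ] Module.End ℂ L}

lemma gen_tmul_one (hψ : IsProductEmbedding ι₁ ι₂ ext ψ) (a : L₁) {w : L₁ ≃ₐ[ℂ] L₁}
    (hw : w ∈ M₁) :
    ψ (⟨gen a w, gen_mem_skew a hw⟩ ⊗ₜ[ℂ] 1) = gen (ι₁ a) (ext (w, 1)) := by
  have hone : (1 : skew M₂) = ⟨gen 1 1, gen_mem_skew 1 (one_mem M₂)⟩ :=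
    Subtype.ext gen_one_one.symm
  rw [hone, hψ a 1 w 1 hw (one_mem M₂), map_one, mul_one]

lemma one_tmul_gen (hψ : IsProductEmbedding ι₁ ι₂ ext ψ) (b : L₂) {w : L₂ ≃ₐ[ℂ] L₂}
    (hw : w ∈ M₂) :
    ψ (1 ⊗ₜ[ℂ] ⟨gen b w, gen_mem_skew b hw⟩) = gen (ι₂ b) (ext (1, w)) := by
  have hone : (1 : skew M₁) = ⟨gen 1 1, gen_mem_skew 1 (one_mem M₁)⟩ :=
    Subtype.ext gen_one_one.symm
  rw [hone, hψ 1 b 1 w (one_mem M₁) hw, map_one, one_mul]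

lemma image_gammaMulSet_left (hψ : IsProductEmbedding ι₁ ι₂ ext ψ) (Γ₁ : Subalgebra ℂ L₁) :
    ψ.comp Algebra.TensorProduct.includeLeft '' ((skew M₁).val ⁻¹' gammaMulSet Γ₁) =
      gammaMulSet (Γ₁.map ι₁) := by
  have hgen : ∀ γ, ψ (⟨gen γ 1, gen_mem_skew γ (one_mem M₁)⟩ ⊗ₜ[ℂ] 1) = gen (ι₁ γ) 1 :=
    fun γ => (hψ.gen_tmul_one γ (one_mem M₁)).trans (congrArg _ (map_one ext))
  ext Z
  constructor
  · rintro ⟨⟨_, _⟩, ⟨γ, hγ, rfl⟩, rfl⟩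
    exact ⟨ι₁ γ, ⟨γ, hγ, rfl⟩, hgen γ⟩
  · rintro ⟨_, ⟨γ, hγ, rfl⟩, rfl⟩
    exact ⟨_, ⟨γ, hγ, rfl⟩, hgen γ⟩

lemma image_gammaMulSet_right (hψ : IsProductEmbedding ι₁ ι₂ ext ψ) (Γ₂ : Subalgebra ℂ L₂) :
    ψ.comp Algebra.TensorProduct.includeRight '' ((skew M₂).val ⁻¹' gammaMulSet Γ₂) =
      gammaMulSet (Γ₂.map ι₂) := by
  have hgen : ∀ γ, ψ (1 ⊗ₜ[ℂ] ⟨gen γ 1, gen_mem_skew γ (one_mem M₂)⟩) = gen (ι₂ γ) 1 :=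
    fun γ => (hψ.one_tmul_gen γ (one_mem M₂)).trans (congrArg _ (map_one ext))
  ext Z
  constructor
  · rintro ⟨⟨_, _⟩, ⟨γ, hγ, rfl⟩, rfl⟩
    exact ⟨ι₂ γ, ⟨γ, hγ, rfl⟩, hgen γ⟩
  · rintro ⟨_, ⟨γ, hγ, rfl⟩, rfl⟩
    exact ⟨_, ⟨γ, hγ, rfl⟩, hgen γ⟩

lemma tensorImage_adjoin_gammaMulSet_union (hψ : IsProductEmbedding ι₁ ι₂ ext ψ)
    (Γ₁ : Subalgebra ℂ L₁) (Γ₂ : Subalgebra ℂ L₂) {s₁ : Set (Module.End ℂ L₁)}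
    {s₂ : Set (Module.End ℂ L₂)} (h₁ : s₁ ⊆ skew M₁) (h₂ : s₂ ⊆ skew M₂) :
    tensorImage ψ (Subalgebra.toSubmodule (Algebra.adjoin ℂ (gammaMulSet Γ₁ ∪ s₁)))
        (Subalgebra.toSubmodule (Algebra.adjoin ℂ (gammaMulSet Γ₂ ∪ s₂))) =
      Subalgebra.toSubmodule (Algebra.adjoin ℂ (gammaMulSet (tensorSub Γ₁ Γ₂ ι₁ ι₂) ∪
        (ψ.comp Algebra.TensorProduct.includeLeft '' ((skew M₁).val ⁻¹' s₁) ∪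
          ψ.comp Algebra.TensorProduct.includeRight '' ((skew M₂).val ⁻¹' s₂)))) := by
  rw [tensorImage_adjoin (Set.union_subset (gammaMulSet_subset_skew Γ₁ M₁) h₁)
    (Set.union_subset (gammaMulSet_subset_skew Γ₂ M₂) h₂), Set.preimage_union, Set.preimage_union,
    Set.image_union, Set.image_union, hψ.image_gammaMulSet_left, hψ.image_gammaMulSet_right,
    Set.union_union_union_comm]
  simp only [Algebra.adjoin_union, adjoin_gammaMulSet, tensorSub_eq_sup, mulOps_sup]

lemma tensorImage_mulOps (hψ : IsProductEmbedding ι₁ ι₂ ext ψ) (Γ₁ : Subalgebra ℂ L₁)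
    (Γ₂ : Subalgebra ℂ L₂) :
    tensorImage ψ (Subalgebra.toSubmodule (mulOps Γ₁)) (Subalgebra.toSubmodule (mulOps Γ₂)) =
      Subalgebra.toSubmodule (mulOps (tensorSub Γ₁ Γ₂ ι₁ ι₂)) := by
  simpa only [Set.union_empty, Set.preimage_empty, Set.image_empty, adjoin_gammaMulSet] using
    hψ.tensorImage_adjoin_gammaMulSet_union Γ₁ Γ₂ (Set.empty_subset _) (Set.empty_subset _)

lemma exists_finset_tensorImage_eq_adjoin (hψ : IsProductEmbedding ι₁ ι₂ ext ψ)
    (Γ₁ : Subalgebra ℂ L₁) (Γ₂ : Subalgebra ℂ L₂)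
    {s₁ : Finset (Module.End ℂ L₁)} {s₂ : Finset (Module.End ℂ L₂)}
    (h₁ : (s₁ : Set (Module.End ℂ L₁)) ⊆ skew M₁)
    (h₂ : (s₂ : Set (Module.End ℂ L₂)) ⊆ skew M₂) :
    ∃ s : Finset (Module.End ℂ L),
      tensorImage ψ (Subalgebra.toSubmodule (Algebra.adjoin ℂ (gammaMulSet Γ₁ ∪ s₁)))
          (Subalgebra.toSubmodule (Algebra.adjoin ℂ (gammaMulSet Γ₂ ∪ s₂))) =
        Subalgebra.toSubmodule
          (Algebra.adjoin ℂ (gammaMulSet (tensorSub Γ₁ Γ₂ ι₁ ι₂) ∪ s)) := by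
  have hfin := ((s₁.finite_toSet.preimage (Subtype.val_injective (p := (· ∈ skew M₁))).injOn).image
    (ψ.comp Algebra.TensorProduct.includeLeft)).union
    ((s₂.finite_toSet.preimage (Subtype.val_injective (p := (· ∈ skew M₂))).injOn).image
      (ψ.comp Algebra.TensorProduct.includeRight))
  refine ⟨hfin.toFinset, ?_⟩
  rw [hfin.coe_toFinset]
  exact hψ.tensorImage_adjoin_gammaMulSet_union Γ₁ Γ₂ h₁ h₂

lemma range_le_skew (hψ : IsProductEmbedding ι₁ ι₂ ext ψ) :
    ψ.range ≤ skew (Submonoid.map ext (M₁.prod M₂)) := by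
  rw [← OrderEmbedding.le_iff_le Subalgebra.toSubmodule, ← tensorImage_toSubmodule_self,
    tensorImage_le]
  rintro X₁ - X₂ -
  induction X₁ using skew_induction with
  | add X Y hX hY =>
    rw [TensorProduct.add_tmul, map_add]
    exact add_mem hX hY
  | gen a w₁ h₁ =>
    induction X₂ using skew_induction with
    | add X Y hX hY =>
      rw [TensorProduct.tmul_add, map_add]
      exact add_mem hX hY
    | gen b w₂ h₂ =>
      rw [hψ a b w₁ w₂ h₁ h₂]
      exact gen_mem_skew _ ⟨(w₁, w₂), ⟨h₁, h₂⟩, rfl⟩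

lemma conj_tmul (hψ : IsProductEmbedding ι₁ ι₂ ext ψ) (hext : IsProductExtension ι₁ ι₂ ext)
    {w₁ : L₁ ≃ₐ[ℂ] L₁} {w₂ : L₂ ≃ₐ[ℂ] L₂} (h₁ : ∀ μ ∈ M₁, w₁ * μ * w₁⁻¹ ∈ M₁)
    (h₂ : ∀ μ ∈ M₂, w₂ * μ * w₂⁻¹ ∈ M₂) (X₁ : skew M₁) (X₂ : skew M₂) :
    conj (ext (w₁, w₂)) (ψ (X₁ ⊗ₜ[ℂ] X₂)) =
      ψ (conjSkew w₁ h₁ X₁ ⊗ₜ[ℂ] conjSkew w₂ h₂ X₂) := by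
  induction X₁ using skew_induction with
  | add X Y hX hY => simp only [TensorProduct.add_tmul, map_add, hX, hY]
  | gen a v₁ hv₁ =>
    induction X₂ using skew_induction with
    | add X Y hX hY => simp only [TensorProduct.tmul_add, map_add, hX, hY]
    | gen b v₂ hv₂ =>
      rw [conjSkew_gen h₁ a hv₁, conjSkew_gen h₂ b hv₂, hψ a b v₁ v₂ hv₁ hv₂,
        hψ _ _ _ _ (h₁ v₁ hv₁) (h₂ v₂ hv₂), conj_gen, hext, ← map_inv, ← map_mul, ← map_mul]
      rfl

lemma apply_mul (hψ : IsProductEmbedding ι₁ ι₂ ext ψ) (hext : IsProductExtension ι₁ ι₂ ext)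
    (X₁ : skew M₁) (X₂ : skew M₂) (f : L₁) (g : L₂) :
    ψ (X₁ ⊗ₜ[ℂ] X₂) (ι₁ f * ι₂ g) =
      ι₁ ((X₁ : Module.End ℂ L₁) f) * ι₂ ((X₂ : Module.End ℂ L₂) g) := by
  induction X₁ using skew_induction with
  | add X Y hX hY =>
    simp only [TensorProduct.add_tmul, map_add, LinearMap.add_apply, hX, hY, Subalgebra.coe_add,
      add_mul]
  | gen a w₁ h₁ =>
    induction X₂ using skew_induction with
    | add X Y hX hY =>
      simp only [TensorProduct.tmul_add, map_add, LinearMap.add_apply, hX, hY,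
        Subalgebra.coe_add, mul_add]
    | gen b w₂ h₂ =>
      rw [hψ a b w₁ w₂ h₁ h₂, gen_apply, hext, gen_apply, gen_apply, map_mul, map_mul]
      ring

lemma apply_mem_tensorSub (hψ : IsProductEmbedding ι₁ ι₂ ext ψ)
    (hext : IsProductExtension ι₁ ι₂ ext)
    {Γ₁ : Subalgebra ℂ L₁} {Γ₂ : Subalgebra ℂ L₂} {V₁ : Submodule ℂ (Module.End ℂ L₁)}
    {V₂ : Submodule ℂ (Module.End ℂ L₂)} (h₁ : ∀ X ∈ V₁, ∀ γ ∈ Γ₁, X γ ∈ Γ₁)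
    (h₂ : ∀ X ∈ V₂, ∀ γ ∈ Γ₂, X γ ∈ Γ₂) :
    ∀ Z ∈ tensorImage ψ V₁ V₂, ∀ γ ∈ tensorSub Γ₁ Γ₂ ι₁ ι₂, Z γ ∈ tensorSub Γ₁ Γ₂ ι₁ ι₂ := by
  intro Z hZ γ hγ
  suffices h : tensorImage ψ V₁ V₂ ≤
      (Subalgebra.toSubmodule (tensorSub Γ₁ Γ₂ ι₁ ι₂)).comap (LinearMap.applyₗ γ) from h hZ
  refine tensorImage_le.mpr fun X₁ hX₁ X₂ hX₂ => ?_
  change ψ (X₁ ⊗ₜ[ℂ] X₂) γ ∈ tensorSub Γ₁ Γ₂ ι₁ ι₂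
  refine tensorSub_induction (p := fun γ => ψ (X₁ ⊗ₜ[ℂ] X₂) γ ∈ tensorSub Γ₁ Γ₂ ι₁ ι₂)
    (fun a ha b hb => ?_) (fun x y hx hy => ?_) hγ
  · rw [hψ.apply_mul hext]
    exact mul_mem_tensorSub (h₁ _ hX₁ a ha) (h₂ _ hX₂ b hb)
  · rw [map_add]
    exact add_mem hx hy

lemma gen_mem_range (hψ : IsProductEmbedding ι₁ ι₂ ext ψ) {t : L}
    (ht : t ∈ tensorSub ⊤ ⊤ ι₁ ι₂) : gen t 1 ∈ ψ.range := by
  have hgen : gen t 1 ∈ Subalgebra.toSubmodule (mulOps (tensorSub ⊤ ⊤ ι₁ ι₂)) :=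
    gen_mem_mulOps ht
  rw [← hψ.tensorImage_mulOps] at hgen
  rw [← Subalgebra.mem_toSubmodule, ← tensorImage_toSubmodule_self]
  exact tensorImage_mono (mulOps_le_skew ⊤ M₁) (mulOps_le_skew ⊤ M₂) hgen

lemma gen_one_ext_mem_range (hψ : IsProductEmbedding ι₁ ι₂ ext ψ) {w₁ : L₁ ≃ₐ[ℂ] L₁}
    {w₂ : L₂ ≃ₐ[ℂ] L₂} (h₁ : w₁ ∈ M₁) (h₂ : w₂ ∈ M₂) : gen 1 (ext (w₁, w₂)) ∈ ψ.range :=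
  ⟨_, (hψ 1 1 w₁ w₂ h₁ h₂).trans (by rw [map_one, map_one, one_mul])⟩

lemma toSubmodule_skew_le_mulOps_mul_range (hψ : IsProductEmbedding ι₁ ι₂ ext ψ)
    {K : Subalgebra ℂ L} (hK : ∀ x, ∃ k ∈ K, ∃ t ∈ tensorSub ⊤ ⊤ ι₁ ι₂, x = k * t) :
    Subalgebra.toSubmodule (skew (Submonoid.map ext (M₁.prod M₂))) ≤
      Subalgebra.toSubmodule (mulOps K) * Subalgebra.toSubmodule ψ.range := by
  rw [toSubmodule_skew, Submodule.span_le]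
  rintro _ ⟨f, _, ⟨⟨w₁, w₂⟩, ⟨h₁, h₂⟩, rfl⟩, rfl⟩
  obtain ⟨k, hk, t, ht, rfl⟩ := hK f
  have hgen : gen (k * t) (ext (w₁, w₂)) = gen k 1 * (gen t 1 * gen 1 (ext (w₁, w₂))) := by
    rw [← gen_eq_gen_one_mul, gen_mul_gen, one_mul, AlgEquiv.one_apply]
  have hrange : gen t 1 * gen 1 (ext (w₁, w₂)) ∈ ψ.range :=
    mul_mem (hψ.gen_mem_range ht) (hψ.gen_one_ext_mem_range h₁ h₂)
  exact hgen ▸ Submodule.mul_mem_mul (gen_mem_mulOps hk) hrange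

lemma toSubmodule_skew_le_range_mul_mulOps (hψ : IsProductEmbedding ι₁ ι₂ ext ψ)
    {K : Subalgebra ℂ L} (hK : ∀ x, ∃ k ∈ K, ∃ t ∈ tensorSub ⊤ ⊤ ι₁ ι₂, x = k * t) :
    Subalgebra.toSubmodule (skew (Submonoid.map ext (M₁.prod M₂))) ≤
      Subalgebra.toSubmodule ψ.range * Subalgebra.toSubmodule (mulOps K) := by
  rw [toSubmodule_skew, Submodule.span_le]
  rintro _ ⟨f, _, ⟨⟨w₁, w₂⟩, ⟨h₁, h₂⟩, rfl⟩, rfl⟩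
  obtain ⟨k, hk, t, ht, hf⟩ := hK ((ext (w₁, w₂))⁻¹ f)
  have hgen : gen f (ext (w₁, w₂)) = gen 1 (ext (w₁, w₂)) * gen t 1 * gen k 1 := by
    rw [gen_eq_mul_gen_one, hf, mul_assoc, gen_mul_gen t k, one_mul, AlgEquiv.one_apply,
      mul_comm k t]
  have hrange : gen 1 (ext (w₁, w₂)) * gen t 1 ∈ ψ.range :=
    mul_mem (hψ.gen_one_ext_mem_range h₁ h₂) (hψ.gen_mem_range ht)
  exact hgen ▸ Submodule.mul_mem_mul hrange (gen_mem_mulOps hk)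

lemma tensorImage_conjInvariants_le (hψ : IsProductEmbedding ι₁ ι₂ ext ψ)
    (hext : IsProductExtension ι₁ ι₂ ext) (h₁ : ∀ w ∈ W₁, ∀ μ ∈ M₁, w * μ * w⁻¹ ∈ M₁)
    (h₂ : ∀ w ∈ W₂, ∀ μ ∈ M₂, w * μ * w⁻¹ ∈ M₂) :
    tensorImage ψ (Subalgebra.toSubmodule (conjInvariants M₁ W₁))
        (Subalgebra.toSubmodule (conjInvariants M₂ W₂)) ≤
      Subalgebra.toSubmodule (conjInvariants (Submonoid.map ext (M₁.prod M₂))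
        (Subgroup.map ext (W₁.prod W₂))) := by
  refine tensorImage_le.mpr fun X₁ hX₁ X₂ hX₂ =>
    mem_conjInv.mpr ⟨hψ.range_le_skew ⟨_, rfl⟩, ?_⟩
  rintro _ ⟨⟨w₁, w₂⟩, ⟨hw₁, hw₂⟩, rfl⟩
  have hfix₁ : conjSkew w₁ (h₁ w₁ hw₁) X₁ = X₁ := Subtype.ext ((mem_conjInv.mp hX₁).2 w₁ hw₁)
  have hfix₂ : conjSkew w₂ (h₂ w₂ hw₂) X₂ = X₂ := Subtype.ext ((mem_conjInv.mp hX₂).2 w₂ hw₂)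
  rw [hψ.conj_tmul hext (h₁ w₁ hw₁) (h₂ w₂ hw₂), hfix₁, hfix₂]

lemma conjTrace_tmul [Fintype W₁] [Fintype W₂] (hψ : IsProductEmbedding ι₁ ι₂ ext ψ)
    (hext : IsProductExtension ι₁ ι₂ ext) (h₁ : ∀ w ∈ W₁, ∀ μ ∈ M₁, w * μ * w⁻¹ ∈ M₁)
    (h₂ : ∀ w ∈ W₂, ∀ μ ∈ M₂, w * μ * w⁻¹ ∈ M₂) (X₁ : skew M₁) (X₂ : skew M₂) :
    conjTrace (prodAction ext W₁ W₂) (ψ (X₁ ⊗ₜ[ℂ] X₂)) =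
      ψ ((∑ g : W₁, conjSkew g.1 (h₁ g.1 g.2) X₁) ⊗ₜ[ℂ]
        (∑ g : W₂, conjSkew g.1 (h₂ g.1 g.2) X₂)) := by
  rw [conjTrace_apply, Fintype.sum_prod_type, TensorProduct.sum_tmul, map_sum]
  refine Finset.sum_congr rfl fun g₁ _ => ?_
  rw [TensorProduct.tmul_sum, map_sum]
  exact Finset.sum_congr rfl fun g₂ _ => hψ.conj_tmul hext (h₁ g₁.1 g₁.2) (h₂ g₂.1 g₂.2) X₁ X₂

lemma map_conjTrace_range_le [Fintype W₁] [Fintype W₂] (hψ : IsProductEmbedding ι₁ ι₂ ext ψ)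
    (hext : IsProductExtension ι₁ ι₂ ext) (h₁ : ∀ w ∈ W₁, ∀ μ ∈ M₁, w * μ * w⁻¹ ∈ M₁)
    (h₂ : ∀ w ∈ W₂, ∀ μ ∈ M₂, w * μ * w⁻¹ ∈ M₂) :
    (Subalgebra.toSubmodule ψ.range).map (conjTrace (prodAction ext W₁ W₂)) ≤
      tensorImage ψ (Subalgebra.toSubmodule (conjInvariants M₁ W₁))
        (Subalgebra.toSubmodule (conjInvariants M₂ W₂)) := by
  rw [← tensorImage_toSubmodule_self, Submodule.map_le_iff_le_comap, tensorImage_le]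
  intro X₁ _ X₂ _
  rw [Submodule.mem_comap, hψ.conjTrace_tmul hext h₁ h₂]
  exact tmul_mem_tensorImage (sum_conjSkew_mem_conjInvariants h₁ X₁)
    (sum_conjSkew_mem_conjInvariants h₂ X₂)

variable [Finite W₁] [Finite W₂]

lemma conjInvariants_le_mul_tensorImage (hψ : IsProductEmbedding ι₁ ι₂ ext ψ)
    (hext : IsProductExtension ι₁ ι₂ ext) (h₁ : ∀ w ∈ W₁, ∀ μ ∈ M₁, w * μ * w⁻¹ ∈ M₁)
    (h₂ : ∀ w ∈ W₂, ∀ μ ∈ M₂, w * μ * w⁻¹ ∈ M₂)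
    (hK : ∀ x, ∃ k ∈ fixedSub ⊤ (Subgroup.map ext (W₁.prod W₂)),
      ∃ t ∈ tensorSub ⊤ ⊤ ι₁ ι₂, x = k * t) :
    Subalgebra.toSubmodule (conjInvariants (Submonoid.map ext (M₁.prod M₂))
        (Subgroup.map ext (W₁.prod W₂))) ≤
      Subalgebra.toSubmodule (mulOps (fixedSub ⊤ (Subgroup.map ext (W₁.prod W₂)))) *
        tensorImage ψ (Subalgebra.toSubmodule (conjInvariants M₁ W₁))
          (Subalgebra.toSubmodule (conjInvariants M₂ W₂)) := by
  cases nonempty_fintype W₁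
  cases nonempty_fintype W₂
  rw [← range_prodAction] at hK ⊢
  calc _ ≤ (Subalgebra.toSubmodule (skew (Submonoid.map ext (M₁.prod M₂)))).map
            (conjTrace (prodAction ext W₁ W₂)) := conjInvariants_le_map_conjTrace _ _
    _ ≤ (Subalgebra.toSubmodule (mulOps (fixedSub ⊤ (prodAction ext W₁ W₂).range)) *
          Subalgebra.toSubmodule ψ.range).map (conjTrace (prodAction ext W₁ W₂)) :=
        Submodule.map_mono (hψ.toSubmodule_skew_le_mulOps_mul_range hK)
    _ ≤ Subalgebra.toSubmodule (mulOps (fixedSub ⊤ (prodAction ext W₁ W₂).range)) *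
          (Subalgebra.toSubmodule ψ.range).map (conjTrace (prodAction ext W₁ W₂)) :=
        map_conjTrace_mul_left _ fun _ => conj_eq_of_mem_mulOps_fixedSub _
    _ ≤ _ := mul_le_mul' le_rfl (hψ.map_conjTrace_range_le hext h₁ h₂)

lemma conjInvariants_le_tensorImage_mul (hψ : IsProductEmbedding ι₁ ι₂ ext ψ)
    (hext : IsProductExtension ι₁ ι₂ ext) (h₁ : ∀ w ∈ W₁, ∀ μ ∈ M₁, w * μ * w⁻¹ ∈ M₁)
    (h₂ : ∀ w ∈ W₂, ∀ μ ∈ M₂, w * μ * w⁻¹ ∈ M₂)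
    (hK : ∀ x, ∃ k ∈ fixedSub ⊤ (Subgroup.map ext (W₁.prod W₂)),
      ∃ t ∈ tensorSub ⊤ ⊤ ι₁ ι₂, x = k * t) :
    Subalgebra.toSubmodule (conjInvariants (Submonoid.map ext (M₁.prod M₂))
        (Subgroup.map ext (W₁.prod W₂))) ≤
      tensorImage ψ (Subalgebra.toSubmodule (conjInvariants M₁ W₁))
          (Subalgebra.toSubmodule (conjInvariants M₂ W₂)) *
        Subalgebra.toSubmodule (mulOps (fixedSub ⊤ (Subgroup.map ext (W₁.prod W₂)))) := by
  cases nonempty_fintype W₁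
  cases nonempty_fintype W₂
  rw [← range_prodAction] at hK ⊢
  calc _ ≤ (Subalgebra.toSubmodule (skew (Submonoid.map ext (M₁.prod M₂)))).map
            (conjTrace (prodAction ext W₁ W₂)) := conjInvariants_le_map_conjTrace _ _
    _ ≤ (Subalgebra.toSubmodule ψ.range *
          Subalgebra.toSubmodule (mulOps (fixedSub ⊤ (prodAction ext W₁ W₂).range))).map
            (conjTrace (prodAction ext W₁ W₂)) :=
        Submodule.map_mono (hψ.toSubmodule_skew_le_range_mul_mulOps hK)
    _ ≤ (Subalgebra.toSubmodule ψ.range).map (conjTrace (prodAction ext W₁ W₂)) *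
          Subalgebra.toSubmodule (mulOps (fixedSub ⊤ (prodAction ext W₁ W₂).range)) :=
        map_conjTrace_mul_right _ fun _ => conj_eq_of_mem_mulOps_fixedSub _
    _ ≤ _ := mul_le_mul' (hψ.map_conjTrace_range_le hext h₁ h₂) le_rfl

lemma toSubmodule_conjInvariants_eq_mul_tensorImage (hψ : IsProductEmbedding ι₁ ι₂ ext ψ)
    (hext : IsProductExtension ι₁ ι₂ ext) (h₁ : ∀ w ∈ W₁, ∀ μ ∈ M₁, w * μ * w⁻¹ ∈ M₁)
    (h₂ : ∀ w ∈ W₂, ∀ μ ∈ M₂, w * μ * w⁻¹ ∈ M₂)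
    (hK : ∀ x, ∃ k ∈ fixedSub ⊤ (Subgroup.map ext (W₁.prod W₂)),
      ∃ t ∈ tensorSub ⊤ ⊤ ι₁ ι₂, x = k * t)
    {V₁ : Submodule ℂ (Module.End ℂ L₁)} {V₂ : Submodule ℂ (Module.End ℂ L₂)}
    (hV₁ : Subalgebra.toSubmodule (conjInvariants M₁ W₁) =
      Subalgebra.toSubmodule (mulOps (fixedSub ⊤ W₁)) * V₁)
    (hV₂ : Subalgebra.toSubmodule (conjInvariants M₂ W₂) =
      Subalgebra.toSubmodule (mulOps (fixedSub ⊤ W₂)) * V₂) :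
    Subalgebra.toSubmodule (conjInvariants (Submonoid.map ext (M₁.prod M₂))
        (Subgroup.map ext (W₁.prod W₂))) =
      Subalgebra.toSubmodule (mulOps (fixedSub ⊤ (Subgroup.map ext (W₁.prod W₂)))) *
        tensorImage ψ V₁ V₂ := by
  have hle₁ : V₁ ≤ Subalgebra.toSubmodule (conjInvariants M₁ W₁) :=
    (le_toSubmodule_mul _ _).trans hV₁.ge
  have hle₂ : V₂ ≤ Subalgebra.toSubmodule (conjInvariants M₂ W₂) :=
    (le_toSubmodule_mul _ _).trans hV₂.ge
  refine le_antisymm ((hψ.conjInvariants_le_mul_tensorImage hext h₁ h₂ hK).trans ?_) ?_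
  · rw [hV₁, hV₂, tensorImage_mul (mulOps_le_skew _ M₁)
      (hle₁.trans (conjInvariants_le_skew M₁ W₁)) (mulOps_le_skew _ M₂)
      (hle₂.trans (conjInvariants_le_skew M₂ W₂)), hψ.tensorImage_mulOps, ← mul_assoc]
    exact mul_le_mul' ((Subalgebra.mul_toSubmodule_le _ _).trans
      (sup_le le_rfl (mulOps_mono hext.tensorSub_fixedSub_le))) le_rfl
  · have himage := (tensorImage_mono hle₁ hle₂).trans
      (hψ.tensorImage_conjInvariants_le hext h₁ h₂)
    exact Submodule.mul_le.mpr fun k hk X hX =>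
      (conjInvariants _ _).mul_mem (mulOps_fixedSub_le_conjInvariants _ _ hk) (himage hX)

lemma toSubmodule_conjInvariants_eq_tensorImage_mul (hψ : IsProductEmbedding ι₁ ι₂ ext ψ)
    (hext : IsProductExtension ι₁ ι₂ ext) (h₁ : ∀ w ∈ W₁, ∀ μ ∈ M₁, w * μ * w⁻¹ ∈ M₁)
    (h₂ : ∀ w ∈ W₂, ∀ μ ∈ M₂, w * μ * w⁻¹ ∈ M₂)
    (hK : ∀ x, ∃ k ∈ fixedSub ⊤ (Subgroup.map ext (W₁.prod W₂)),
      ∃ t ∈ tensorSub ⊤ ⊤ ι₁ ι₂, x = k * t)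
    {V₁ : Submodule ℂ (Module.End ℂ L₁)} {V₂ : Submodule ℂ (Module.End ℂ L₂)}
    (hV₁ : Subalgebra.toSubmodule (conjInvariants M₁ W₁) =
      V₁ * Subalgebra.toSubmodule (mulOps (fixedSub ⊤ W₁)))
    (hV₂ : Subalgebra.toSubmodule (conjInvariants M₂ W₂) =
      V₂ * Subalgebra.toSubmodule (mulOps (fixedSub ⊤ W₂))) :
    Subalgebra.toSubmodule (conjInvariants (Submonoid.map ext (M₁.prod M₂))
        (Subgroup.map ext (W₁.prod W₂))) =
      tensorImage ψ V₁ V₂ *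
        Subalgebra.toSubmodule (mulOps (fixedSub ⊤ (Subgroup.map ext (W₁.prod W₂)))) := by
  have hle₁ : V₁ ≤ Subalgebra.toSubmodule (conjInvariants M₁ W₁) :=
    (le_mul_toSubmodule _ _).trans hV₁.ge
  have hle₂ : V₂ ≤ Subalgebra.toSubmodule (conjInvariants M₂ W₂) :=
    (le_mul_toSubmodule _ _).trans hV₂.ge
  refine le_antisymm ((hψ.conjInvariants_le_tensorImage_mul hext h₁ h₂ hK).trans ?_) ?_
  · rw [hV₁, hV₂, tensorImage_mul (hle₁.trans (conjInvariants_le_skew M₁ W₁))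
      (mulOps_le_skew _ M₁) (hle₂.trans (conjInvariants_le_skew M₂ W₂)) (mulOps_le_skew _ M₂),
      hψ.tensorImage_mulOps, mul_assoc]
    exact mul_le_mul' le_rfl ((Subalgebra.mul_toSubmodule_le _ _).trans
      (sup_le (mulOps_mono hext.tensorSub_fixedSub_le) le_rfl))
  · have himage := (tensorImage_mono hle₁ hle₂).trans
      (hψ.tensorImage_conjInvariants_le hext h₁ h₂)
    exact Submodule.mul_le.mpr fun X hX k hk =>
      (conjInvariants _ _).mul_mem (himage hX) (mulOps_fixedSub_le_conjInvariants _ _ hk)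

end IsProductEmbedding

lemma IsProductExtension.exists_eq_fixed_mul [Finite W₁] [Finite W₂]
    (hext : IsProductExtension ι₁ ι₂ ext)
    (hfrac : ∀ x, ∃ a ∈ tensorSub ⊤ ⊤ ι₁ ι₂, ∃ b ∈ tensorSub ⊤ ⊤ ι₁ ι₂, b ≠ 0 ∧ x = a / b)
    (x : L) : ∃ k ∈ fixedSub ⊤ (Subgroup.map ext (W₁.prod W₂)),
      ∃ t ∈ tensorSub ⊤ ⊤ ι₁ ι₂, x = k * t := by
  obtain ⟨a, ha, b, hb, hb0, rfl⟩ := hfrac x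
  rw [← range_prodAction]
  exact exists_div_eq_fixed_mul (prodAction ext W₁ W₂)
    (fun _ _ hy => hext.map_mem_tensorSub_top _ hy) ha hb hb0

theorem principal_Galois_orders_closed_under_tensor_general
    (hMN₁ : M₁ ≤ N₁) (hMN₂ : M₂ ≤ N₂) [Finite W₁] [Finite W₂]
    (hinv₁ : ∀ w ∈ W₁, ∀ μ ∈ M₁, w * μ * w⁻¹ ∈ M₁)
    (hinv₂ : ∀ w ∈ W₂, ∀ μ ∈ M₂, w * μ * w⁻¹ ∈ M₂) {Γ₁ : Subalgebra ℂ L₁}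
    {Γ₂ : Subalgebra ℂ L₂} {U₁ : Set (Module.End ℂ L₁)} {U₂ : Set (Module.End ℂ L₂)}
    (hU₁ : IsPrincipalGaloisOrder Γ₁ M₁ W₁ U₁) (hU₂ : IsPrincipalGaloisOrder Γ₂ M₂ W₂ U₂)
    (hfrac : ∀ x, ∃ a ∈ tensorSub ⊤ ⊤ ι₁ ι₂, ∃ b ∈ tensorSub ⊤ ⊤ ι₁ ι₂, b ≠ 0 ∧ x = a / b)
    (hext : IsProductExtension ι₁ ι₂ ext)
    {ψ : (skew N₁ ⊗[ℂ] skew N₂) →ₐ[ℂ] Module.End ℂ L} (hψ : IsProductEmbedding ι₁ ι₂ ext ψ) :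
    IsPrincipalGaloisOrder (tensorSub Γ₁ Γ₂ ι₁ ι₂) (Submonoid.map ext (M₁.prod M₂))
      (Subgroup.map ext (W₁.prod W₂)) (Submodule.map ψ.toLinearMap (pureSpan N₁ N₂ U₁ U₂)) := by
  obtain ⟨s₁, hs₁, rfl⟩ := hU₁.exists_eq_adjoin
  obtain ⟨s₂, hs₂, rfl⟩ := hU₂.exists_eq_adjoin
  rw [isPrincipalGaloisOrder_adjoin_iff] at hU₁ hU₂
  have hS₁ := Subalgebra.toSubmodule.monotone
    (Algebra.adjoin_le (Set.union_subset (gammaMulSet_subset_skew Γ₁ M₁) hs₁))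
  have hS₂ := Subalgebra.toSubmodule.monotone
    (Algebra.adjoin_le (Set.union_subset (gammaMulSet_subset_skew Γ₂ M₂) hs₂))
  have hψM := hψ.restrict hMN₁ hMN₂
  have himage := (map_pureSpan ψ _ _).trans
    (tensorImage_tensorRestrict (skew_mono hMN₁) (skew_mono hMN₂) hS₁ hS₂).symm
  have hK := hext.exists_eq_fixed_mul (W₁ := W₁) (W₂ := W₂) hfrac
  obtain ⟨s, hs⟩ := hψM.exists_finset_tensorImage_eq_adjoin Γ₁ Γ₂ hs₁ hs₂
  have hleft := hψM.toSubmodule_conjInvariants_eq_mul_tensorImage hext hinv₁ hinv₂ hK hU₁.1 hU₂.1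
  have hright := hψM.toSubmodule_conjInvariants_eq_tensorImage_mul hext hinv₁ hinv₂ hK
    hU₁.2.1 hU₂.2.1
  have happly := hψM.apply_mem_tensorSub
    (V₁ := Subalgebra.toSubmodule (Algebra.adjoin ℂ (gammaMulSet Γ₁ ∪ s₁)))
    (V₂ := Subalgebra.toSubmodule (Algebra.adjoin ℂ (gammaMulSet Γ₂ ∪ s₂)))
    hext hU₁.2.2 hU₂.2.2
  rw [hs] at himage hleft hright happly
  refine (congrArg (IsPrincipalGaloisOrder _ _ _) (congrArg SetLike.coe himage)).mpr ?_
  exact isPrincipalGaloisOrder_adjoin_iff.mpr ⟨hleft, hright, happly⟩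

end Product

theorem principal_Galois_orders_closed_under_tensor
    {L₁ L₂ L : Type*} [Field L₁] [Algebra ℂ L₁] [Field L₂] [Algebra ℂ L₂]
    [Field L] [Algebra ℂ L]
    (Λ₁ : Subalgebra ℂ L₁) (Λ₂ : Subalgebra ℂ L₂)
    [IsFractionRing Λ₁ L₁] [IsFractionRing Λ₂ L₂]
    -- Λᵢ integrally closed
    (hic₁ : IsIntegrallyClosed Λ₁) (hic₂ : IsIntegrallyClosed Λ₂)
    -- Wᵢ finite groups of automorphisms of Λᵢ
    (W₁ : Subgroup (L₁ ≃ₐ[ℂ] L₁)) (W₂ : Subgroup (L₂ ≃ₐ[ℂ] L₂))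
    (hW₁fin : (W₁ : Set (L₁ ≃ₐ[ℂ] L₁)).Finite) (hW₂fin : (W₂ : Set (L₂ ≃ₐ[ℂ] L₂)).Finite)
    (hW₁ : ∀ w ∈ W₁, ∀ x : L₁, x ∈ Λ₁ ↔ w x ∈ Λ₁)
    (hW₂ : ∀ w ∈ W₂, ∀ x : L₂, x ∈ Λ₂ ↔ w x ∈ Λ₂)
    -- 𝓜ᵢ submonoids of automorphisms of Λᵢ
    (M₁ : Submonoid (L₁ ≃ₐ[ℂ] L₁)) (M₂ : Submonoid (L₂ ≃ₐ[ℂ] L₂))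
    (hM₁ : ∀ μ ∈ M₁, ∀ x : L₁, x ∈ Λ₁ ↔ μ x ∈ Λ₁)
    (hM₂ : ∀ μ ∈ M₂, ∀ x : L₂, x ∈ Λ₂ ↔ μ x ∈ Λ₂)
    -- separation: (𝓜ᵢ𝓜ᵢ⁻¹) ∩ Wᵢ = 1
    (hsep₁ : ∀ μ ∈ M₁, ∀ ν ∈ M₁, μ * ν⁻¹ ∈ W₁ → μ * ν⁻¹ = 1)
    (hsep₂ : ∀ μ ∈ M₂, ∀ ν ∈ M₂, μ * ν⁻¹ ∈ W₂ → μ * ν⁻¹ = 1)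
    -- invariance: ʷμ ∈ 𝓜ᵢ
    (hinv₁ : ∀ w ∈ W₁, ∀ μ ∈ M₁, w * μ * w⁻¹ ∈ M₁)
    (hinv₂ : ∀ w ∈ W₂, ∀ μ ∈ M₂, w * μ * w⁻¹ ∈ M₂)
    -- finiteness: Λᵢ is Noetherian as a module over Γᵢ = Λᵢ^{Wᵢ}
    (hnoeth₁ : IsNoetherian ↥(fixedSub Λ₁ W₁) ↥(lambdaOver Λ₁ (fixedSub Λ₁ W₁) (fun _ hx => hx.1)))
    (hnoeth₂ : IsNoetherian ↥(fixedSub Λ₂ W₂) ↥(lambdaOver Λ₂ (fixedSub Λ₂ W₂) (fun _ hx => hx.1)))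
    -- 𝒰ᵢ is a principal Galois Γᵢ-order in 𝒦ᵢ = (Lᵢ#𝓜ᵢ)^{Wᵢ}:
    (U₁ : Set (Module.End ℂ L₁)) (U₂ : Set (Module.End ℂ L₂))
    (hU₁K : U₁ ⊆ conjInv M₁ W₁) (hU₂K : U₂ ⊆ conjInv M₂ W₂)
    (hU₁Γ : gammaMulSet (fixedSub Λ₁ W₁) ⊆ U₁)
    (hU₂Γ : gammaMulSet (fixedSub Λ₂ W₂) ⊆ U₂)
    -- finitely generated Γᵢ-subrings
    (hU₁fg : ∃ s : Finset (Module.End ℂ L₁), ↑s ⊆ U₁ ∧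
      U₁ = ↑(Subring.closure (gammaMulSet (fixedSub Λ₁ W₁) ∪ ↑s)))
    (hU₂fg : ∃ s : Finset (Module.End ℂ L₂), ↑s ⊆ U₂ ∧
      U₂ = ↑(Subring.closure (gammaMulSet (fixedSub Λ₂ W₂) ∪ ↑s)))
    -- Kᵢ𝒰ᵢ = 𝒰ᵢKᵢ = 𝒦ᵢ
    (hU₁left : conjInv M₁ W₁ = ↑(Submodule.span ℂ (leftMulSet (fixedSet W₁) U₁)))
    (hU₁right : conjInv M₁ W₁ = ↑(Submodule.span ℂ (rightMulSet (fixedSet W₁) U₁)))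
    (hU₂left : conjInv M₂ W₂ = ↑(Submodule.span ℂ (leftMulSet (fixedSet W₂) U₂)))
    (hU₂right : conjInv M₂ W₂ = ↑(Submodule.span ℂ (rightMulSet (fixedSet W₂) U₂)))
    -- principality: X(γ) ∈ Γᵢ
    (hU₁pr : ∀ X ∈ U₁, ∀ γ ∈ fixedSub Λ₁ W₁, X γ ∈ fixedSub Λ₁ W₁)
    (hU₂pr : ∀ X ∈ U₂, ∀ γ ∈ fixedSub Λ₂ W₂, X γ ∈ fixedSub Λ₂ W₂)
    -- the canonical realization of Λ₁ ⊗ Λ₂ inside L = Frac(Λ₁ ⊗ Λ₂)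
    (ι₁ : L₁ →ₐ[ℂ] L) (ι₂ : L₂ →ₐ[ℂ] L)
    (hι : Function.Injective (Algebra.TensorProduct.productMap ι₁ ι₂))
    (hfrac : ∀ x : L, ∃ a ∈ tensorSub Λ₁ Λ₂ ι₁ ι₂, ∃ b ∈ tensorSub Λ₁ Λ₂ ι₁ ι₂,
      b ≠ 0 ∧ x = a / b)
    (ext : ((L₁ ≃ₐ[ℂ] L₁) × (L₂ ≃ₐ[ℂ] L₂)) →* (L ≃ₐ[ℂ] L))
    (hext : ∀ (p : (L₁ ≃ₐ[ℂ] L₁) × (L₂ ≃ₐ[ℂ] L₂)) (f : L₁) (g : L₂),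
      ext p (ι₁ f * ι₂ g) = ι₁ (p.1 f) * ι₂ (p.2 g))
    -- the canonical embedding ψ
    (ψ : (↥(skew (genMon W₁ M₁)) ⊗[ℂ] ↥(skew (genMon W₂ M₂))) →ₐ[ℂ] Module.End ℂ L)
    (hψ : ∀ (a : L₁) (b : L₂) (w₁ : L₁ ≃ₐ[ℂ] L₁) (w₂ : L₂ ≃ₐ[ℂ] L₂)
        (h₁ : w₁ ∈ genMon W₁ M₁) (h₂ : w₂ ∈ genMon W₂ M₂),
      ψ (⟨gen a w₁, gen_mem_skew a h₁⟩ ⊗ₜ[ℂ] ⟨gen b w₂, gen_mem_skew b h₂⟩)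
        = gen (ι₁ a * ι₂ b) (ext (w₁, w₂))) :
    -- ψ(𝒰₁ ⊗ 𝒰₂) is a principal Galois (Γ₁ ⊗ Γ₂)-order in 𝒦 = (L#(𝓜₁×𝓜₂))^{W₁×W₂}:
    -- it is contained in 𝒦 ...
    ((Submodule.map ψ.toLinearMap (pureSpan (genMon W₁ M₁) (genMon W₂ M₂) U₁ U₂) : Set (Module.End ℂ L)) ⊆
      conjInv (Submonoid.map ext (M₁.prod M₂)) (Subgroup.map ext (W₁.prod W₂))) ∧
    -- ... it contains the multiplication operators by Γ = Γ₁ ⊗ Γ₂ ...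
    (gammaMulSet (tensorSub (fixedSub Λ₁ W₁) (fixedSub Λ₂ W₂) ι₁ ι₂) ⊆
      ↑(Submodule.map ψ.toLinearMap (pureSpan (genMon W₁ M₁) (genMon W₂ M₂) U₁ U₂))) ∧
    -- ... it is a finitely generated (Γ₁ ⊗ Γ₂)-subring ...
    (∃ s : Finset (Module.End ℂ L),
      ↑s ⊆ (Submodule.map ψ.toLinearMap (pureSpan (genMon W₁ M₁) (genMon W₂ M₂) U₁ U₂) : Set (Module.End ℂ L)) ∧
      (Submodule.map ψ.toLinearMap (pureSpan (genMon W₁ M₁) (genMon W₂ M₂) U₁ U₂) : Set (Module.End ℂ L)) =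
        ↑(Subring.closure (gammaMulSet (tensorSub (fixedSub Λ₁ W₁) (fixedSub Λ₂ W₂) ι₁ ι₂) ∪ ↑s))) ∧
    -- ... with K·ψ(𝒰₁⊗𝒰₂) = ψ(𝒰₁⊗𝒰₂)·K = 𝒦 where K = L^{W₁×W₂} ...
    (conjInv (Submonoid.map ext (M₁.prod M₂)) (Subgroup.map ext (W₁.prod W₂)) =
      ↑(Submodule.span ℂ (leftMulSet (fixedSet (Subgroup.map ext (W₁.prod W₂)))
        ↑(Submodule.map ψ.toLinearMap (pureSpan (genMon W₁ M₁) (genMon W₂ M₂) U₁ U₂))))) ∧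
    (conjInv (Submonoid.map ext (M₁.prod M₂)) (Subgroup.map ext (W₁.prod W₂)) =
      ↑(Submodule.span ℂ (rightMulSet (fixedSet (Subgroup.map ext (W₁.prod W₂)))
        ↑(Submodule.map ψ.toLinearMap (pureSpan (genMon W₁ M₁) (genMon W₂ M₂) U₁ U₂))))) ∧
    -- ... and it is principal: X(γ) ∈ Γ₁ ⊗ Γ₂ for all γ ∈ Γ₁ ⊗ Γ₂
    (∀ Z ∈ Submodule.map ψ.toLinearMap (pureSpan (genMon W₁ M₁) (genMon W₂ M₂) U₁ U₂),
      ∀ γ ∈ tensorSub (fixedSub Λ₁ W₁) (fixedSub Λ₂ W₂) ι₁ ι₂,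
        Z γ ∈ tensorSub (fixedSub Λ₁ W₁) (fixedSub Λ₂ W₂) ι₁ ι₂) := by
  have := hW₁fin.to_subtype
  have := hW₂fin.to_subtype
  have hMN₁ : M₁ ≤ genMon W₁ M₁ := Set.subset_union_right.trans Submonoid.subset_closure
  have hMN₂ : M₂ ≤ genMon W₂ M₂ := Set.subset_union_right.trans Submonoid.subset_closure
  have hΛ : tensorSub Λ₁ Λ₂ ι₁ ι₂ ≤ tensorSub ⊤ ⊤ ι₁ ι₂ := tensorSub_mono le_top le_top
  obtain ⟨hK, hΓ, hfg, hleft, hright, happly⟩ :=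
    principal_Galois_orders_closed_under_tensor_general hMN₁ hMN₂ hinv₁ hinv₂
      ⟨hU₁K, hU₁Γ, hU₁fg, hU₁left, hU₁right, hU₁pr⟩ ⟨hU₂K, hU₂Γ, hU₂fg, hU₂left, hU₂right, hU₂pr⟩
      (fun x => let ⟨a, ha, b, hb, h⟩ := hfrac x; ⟨a, hΛ ha, b, hΛ hb, h⟩) hext hψ
  exact ⟨hK, hΓ, hfg, hleft, hright, happly⟩
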